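/- arXiv:2507.12096 — 8 statements merged into one kernel-verified Lean document; each statement's English description precedes it below -/
import Mathlib

section
/- Let G be a digraph, s, t1, t2 ∈ V(G) with s ∉ {t1, t2}, and let c_0, c_1, …, c_k be a sequence of cut vertices between s and t1, t2 whose entries are pairwise distinct. For 0 ≤ i < k let R_i be the set of vertices of G lying on some directed path from c_i to c_{i+1}, and let R_k be the set of vertices lying on some directed path from c_k to t1 or on some directed path from c_k to t2. Then for all 0 ≤ i < j ≤ k: if j = i+1 then R_i ∩ R_j = {c_j}, and if j > i+1 then R_i ∩ R_j = ∅. -/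
/-- A digraph: a finite vertex set together with a set of edges,
which are ordered pairs of distinct vertices. -/
structure Dgraph (V : Type*) where
  verts : Set V
  Edge : V → V → Prop
  mem_of_edge : ∀ ⦃x y⦄, Edge x y → x ∈ verts ∧ y ∈ verts
  ne_of_edge : ∀ ⦃x y⦄, Edge x y → x ≠ y
  finite : verts.Finite

namespace Dgraph

variable {V : Type*}

/-- A directed path: a nonempty sequence of pairwise distinct vertices of `G`
in which each consecutive pair is joined by an edge of `G`. -/
def IsPath (G : Dgraph V) (p : List V) : Prop :=
  p ≠ [] ∧ p.Nodup ∧ p.Chain' G.Edge ∧ ∀ v ∈ p, v ∈ G.verts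

/-- A directed path from `a` to `b`. -/
def PathFrom (G : Dgraph V) (p : List V) (a b : V) : Prop :=
  G.IsPath p ∧ p.head? = some a ∧ p.getLast? = some b

/-- The internal vertices of a path (all vertices except the two endpoints). -/
def internals (p : List V) : List V := p.tail.dropLast

/-- Two paths are internally vertex-disjoint if no internal vertex of either
path lies on both paths. -/
def IntDisjoint (p q : List V) : Prop :=
  ∀ v, v ∈ internals p ∨ v ∈ internals q → ¬(v ∈ p ∧ v ∈ q)

/-- The digraph induced on `V(G) \ D`. -/
def delete (G : Dgraph V) (D : Set V) : Dgraph V where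
  verts := G.verts \ D
  Edge x y := G.Edge x y ∧ x ∉ D ∧ y ∉ D
  mem_of_edge := by
    intro x y h
    exact ⟨⟨(G.mem_of_edge h.1).1, h.2.1⟩, ⟨(G.mem_of_edge h.1).2, h.2.2⟩⟩
  ne_of_edge := by
    intro x y h
    exact G.ne_of_edge h.1
  finite := G.finite.diff

/-- `c 0, c 1, …, c k` is a sequence of cut vertices between `s` and `t1, t2`. -/
def IsCutSeq (G : Dgraph V) (s t1 t2 : V) (k : ℕ) (c : ℕ → V) : Prop :=
  c 0 = s ∧
  (∀ j < k,
    (∃ p q : List V, p ≠ q ∧ G.PathFrom p (c j) (c (j+1)) ∧ G.PathFrom q (c j) (c (j+1)) ∧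
      IntDisjoint p q) ∧
    (∀ p : List V, G.PathFrom p (c j) t1 ∨ G.PathFrom p (c j) t2 → c (j+1) ∈ p)) ∧
  ((c k = t1 ∧ t1 = t2) ∨
   (∃ p q : List V, G.PathFrom p (c k) t1 ∧ G.PathFrom q (c k) t2 ∧ IntDisjoint p q))

end Dgraph

namespace Dgraph

variable {V : Type*}

def Av (G : Dgraph V) (w a b : V) : Prop :=
  a ≠ w ∧ Relation.ReflTransGen (fun x y => G.Edge x y ∧ y ≠ w) a b

theorem Av.trans {G : Dgraph V} {w a b d : V} (h1 : G.Av w a b) (h2 : G.Av w b d) :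
    G.Av w a d := ⟨h1.1, h1.2.trans h2.2⟩

theorem mem_internals {p : List V} {a b x : V} (ha : p.head? = some a) (hb : p.getLast? = some b)
    (hx : x ∈ p) (hxa : x ≠ a) (hxb : x ≠ b) : x ∈ internals p := by
  cases p with
  | nil => simp at hx
  | cons y l =>
    simp only [List.head?_cons, Option.some.injEq] at ha
    subst ha
    have hxl : x ∈ l := by
      rcases List.mem_cons.1 hx with h | h
      · exact absurd h hxa
      · exact h
    have hl : l ≠ [] := List.ne_nil_of_mem hxl
    have hb' : l.getLast hl = b := by
      rw [List.getLast?_eq_some_getLast (by simp), List.getLast_cons hl] at hb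
      simpa using hb
    show x ∈ l.dropLast
    rw [← List.dropLast_append_getLast hl] at hxl
    rcases List.mem_append.1 hxl with h | h
    · exact h
    · rw [hb'] at h
      exact absurd (List.mem_singleton.1 h) hxb

theorem PathFrom.split {G : Dgraph V} {p : List V} {a b v : V} (h : G.PathFrom p a b)
    (hv : v ∈ p) : ∃ p1 p2, G.PathFrom p1 a v ∧ G.PathFrom p2 v b ∧
      (∀ x ∈ p1, x ∈ p) ∧ (∀ x ∈ p2, x ∈ p) ∧ (v ≠ b → b ∉ p1) ∧ (v ≠ a → a ∉ p2) := by
  obtain ⟨l1, l2, rfl⟩ := List.append_of_mem hv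
  obtain ⟨⟨_, hnd, hch, hvs⟩, hh, hl⟩ := h
  have e : l1 ++ v :: l2 = (l1 ++ [v]) ++ l2 := by simp
  have hnd' := List.nodup_append.1 hnd
  have hnd'' : ((l1 ++ [v]) ++ l2).Nodup := e ▸ hnd
  refine ⟨l1 ++ [v], v :: l2, ⟨⟨by simp, (List.nodup_append.1 hnd'').1, ?_, ?_⟩, ?_, by simp⟩,
    ⟨⟨by simp, hnd'.2.1, ?_, ?_⟩, by simp, ?_⟩, ?_, ?_, ?_, ?_⟩
  · have h2 : List.IsChain G.Edge ((l1 ++ [v]) ++ l2) := e ▸ hch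
    exact h2.left_of_append
  · intro x hx; apply hvs; simp at hx ⊢; tauto
  · cases l1 <;> simpa using hh
  · exact List.IsChain.right_of_append hch
  · intro x hx; apply hvs; simp at hx ⊢; tauto
  · simpa using hl
  · intro x hx; simp at hx ⊢; tauto
  · intro x hx; simp at hx ⊢; tauto
  · intro hvb hb
    have : b ∈ l2 := by
      rw [List.getLast?_append_cons] at hl
      have := List.mem_of_getLast? hl
      rcases List.mem_cons.1 this with h | h
      · exact absurd h.symm hvb
      · exact h
    exact (List.nodup_append.1 hnd'').2.2 b hb b this rfl
  · intro hva ha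
    have : a ∈ l1 := by
      cases l1 with
      | nil => simp at hh; exact absurd hh hva
      | cons y l => simp at hh; simp [hh]
    exact hnd'.2.2 a this a ha rfl

theorem PathFrom.head_mem {G : Dgraph V} {p : List V} {a b : V} (h : G.PathFrom p a b) :
    a ∈ p := List.mem_of_head? h.2.1

theorem PathFrom.last_mem {G : Dgraph V} {p : List V} {a b : V} (h : G.PathFrom p a b) :
    b ∈ p := List.mem_of_getLast? h.2.2

theorem PathFrom.av {G : Dgraph V} {w b : V} {p : List V} : ∀ {a : V}, G.PathFrom p a b →
    w ∉ p → G.Av w a b := by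
  induction p with
  | nil => intro a h; exact absurd rfl h.1.1
  | cons y l ih =>
    intro a h hw
    obtain ⟨⟨_, hnd, hch, hvs⟩, hh, hl⟩ := h
    simp at hh; subst hh
    cases l with
    | nil =>
      simp at hl hw; subst hl
      exact ⟨fun h => hw h.symm, Relation.ReflTransGen.refl⟩
    | cons z l =>
      have hch' : List.IsChain G.Edge (y :: z :: l) := hch
      rw [List.isChain_cons_cons] at hch'
      have h2 : G.PathFrom (z :: l) z b := by
        refine ⟨⟨by simp, (List.nodup_cons.1 hnd).2, hch'.2, ?_⟩, by simp, ?_⟩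
        · intro x hx; exact hvs x (List.mem_cons_of_mem _ hx)
        · simpa [List.getLast?_cons_cons] using hl
      have h3 := ih h2 (fun h => hw (List.mem_cons_of_mem _ h))
      refine ⟨fun h => hw (by simp [h]), Relation.ReflTransGen.head ⟨hch'.1, h3.1⟩ h3.2⟩

theorem Av.path {G : Dgraph V} {w a b : V} (h : G.Av w a b) (ha : a ∈ G.verts) :
    ∃ p, G.PathFrom p a b ∧ w ∉ p := by
  obtain ⟨haw, h⟩ := h
  induction h using Relation.ReflTransGen.head_induction_on with
  | refl => exact ⟨[b], ⟨⟨by simp, by simp, List.isChain_singleton _, by simpa using ha⟩, by simp, by simp⟩,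
      by simpa using haw.symm⟩
  | head h1 h2 ih =>
    rename_i a d
    obtain ⟨p, hp, hwp⟩ := ih (G.mem_of_edge h1.1).2 h1.2
    by_cases hap : a ∈ p
    · obtain ⟨p1, p2, _, hp2, _, hs, _⟩ := hp.split hap
      exact ⟨p2, hp2, fun h => hwp (hs _ h)⟩
    · refine ⟨a :: p, ⟨⟨by simp, List.nodup_cons.2 ⟨hap, hp.1.2.1⟩, ?_, ?_⟩, by simp, ?_⟩, ?_⟩
      · obtain ⟨⟨hne, _, hch, _⟩, hh, _⟩ := hp
        cases p with
        | nil => exact absurd rfl hne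
        | cons z l =>
          simp at hh; subst hh
          exact List.isChain_cons_cons.2 ⟨h1.1, hch⟩
      · intro x hx
        rcases List.mem_cons.1 hx with h | h
        · exact h ▸ ha
        · exact hp.1.2.2.2 x h
      · rw [List.getLast?_cons, hp.2.2]; rfl
      · intro h
        rcases List.mem_cons.1 h with h | h
        · exact haw h.symm
        · exact hwp h

end Dgraph

/-- **the regions `R i` are almost disjoint.**
Let `c 0, …, c k` be a sequence of cut vertices between `s` and `t1, t2` with
pairwise distinct entries.  For `i < k` let `R i` be the set of vertices lying
on some directed path from `c i` to `c (i+1)`, and let `R k` be the set of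
vertices lying on some directed path from `c k` to `t1` or to `t2`.  Then for
`i < j ≤ k`: if `j = i + 1` then `R i ∩ R j = {c j}`, and if `j > i + 1` then
`R i ∩ R j = ∅`. -/
theorem stmt3 {V : Type*} (G : Dgraph V) (s t1 t2 : V)
    (hs1 : s ≠ t1) (hs2 : s ≠ t2)
    (k : ℕ) (c : ℕ → V)
    (hcut : G.IsCutSeq s t1 t2 k c)
    (hinj : ∀ i j, i ≤ k → j ≤ k → c i = c j → i = j)
    (R : ℕ → Set V)
    (hR : ∀ i < k, R i = {v | ∃ p : List V, G.PathFrom p (c i) (c (i + 1)) ∧ v ∈ p})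
    (hRk : R k = {v | ∃ p : List V,
        (G.PathFrom p (c k) t1 ∨ G.PathFrom p (c k) t2) ∧ v ∈ p}) :
    ∀ i j, i < j → j ≤ k →
      (j = i + 1 → R i ∩ R j = {c j}) ∧ (i + 1 < j → R i ∩ R j = ∅) := by
  obtain ⟨-, hc, hend⟩ := hcut
  -- membership of t
  have hvert : ∀ m, m < k → c m ∈ G.verts := by
    intro m hm
    obtain ⟨⟨p, q, _, hp, _⟩, _⟩ := hc m hm
    exact hp.1.2.2.2 _ hp.head_mem
  have hC1 : ∀ m l, m < l → l ≤ k → ∀ p t, (t = t1 ∨ t = t2) → G.PathFrom p (c m) t →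
      c l ∈ p := by
    intro m l hml
    induction l, hml using Nat.le_induction with
    | base =>
      intro hl p t ht hp
      apply (hc m (by omega)).2 p
      rcases ht with rfl | rfl
      · exact Or.inl hp
      · exact Or.inr hp
    | succ l hml ih =>
      intro hl p t ht hp
      obtain ⟨p1, p2, _, hp2, _, hs, _⟩ := hp.split (ih (by omega) p t ht hp)
      apply hs
      apply (hc l (by omega)).2 p2
      rcases ht with rfl | rfl
      · exact Or.inl hp2
      · exact Or.inr hp2
  have hC : ∀ m l, m < l → l ≤ k → ∀ t, (t = t1 ∨ t = t2) → ¬ G.Av (c l) (c m) t := by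
    intro m l hml hl t ht h
    obtain ⟨p, hp, hw⟩ := h.path (hvert m (by omega))
    exact hw (hC1 m l hml hl p t ht hp)
  have hne : ∀ m, m < k → ∀ t, (t = t1 ∨ t = t2) → c m ≠ t := by
    intro m hm t ht h
    refine hC m (m+1) (by omega) hm t ht ⟨?_, ?_⟩
    · intro h2
      have := hinj _ _ (by omega) (by omega) h2
      omega
    · rw [h]
  have hN : ∀ m l, m < l → l ≤ k → ∃ t, (t = t1 ∨ t = t2) ∧ G.Av (c m) (c l) t := by
    intro m l hml hl
    induction hl using Nat.decreasingInduction with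
    | self =>
      have hmk : c k ≠ c m := by
        intro h
        have := hinj _ _ le_rfl (by omega) h
        omega
      rcases hend with ⟨h, _⟩ | ⟨p, q, hp, hq, hd⟩
      · exact ⟨t1, Or.inl rfl, hmk, by rw [h]⟩
      · by_cases h1 : c m ∈ p
        · by_cases h2 : c m ∈ q
          · exact absurd ⟨h1, h2⟩ (hd (c m) (Or.inl (Dgraph.mem_internals hp.2.1 hp.2.2 h1 hmk.symm
              (hne m hml t1 (Or.inl rfl)))))
          · exact ⟨t2, Or.inr rfl, hq.av h2⟩
        · exact ⟨t1, Or.inl rfl, hp.av h1⟩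
    | of_succ l hl ih =>
      obtain ⟨t, ht, hav⟩ := ih (by omega)
      refine ⟨t, ht, ?_⟩
      obtain ⟨⟨p, q, _, hp, hq, hd⟩, _⟩ := hc l hl
      have e1 : c m ≠ c l := by
        intro h
        have := hinj _ _ (by omega) (by omega) h
        omega
      have e2 : c m ≠ c (l+1) := by
        intro h
        have := hinj _ _ (by omega) (by omega) h
        omega
      by_cases h1 : c m ∈ p
      · by_cases h2 : c m ∈ q
        · exact absurd ⟨h1, h2⟩ (hd (c m) (Or.inl (Dgraph.mem_internals hp.2.1 hp.2.2 h1 e1 e2)))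
        · exact (hq.av h2).trans hav
      · exact (hp.av h1).trans hav
  -- every vertex of `R j` lies on a path whose end reaches a terminal
  have hRj : ∀ j, j ≤ k → ∀ v ∈ R j, ∃ p b, G.PathFrom p (c j) b ∧ v ∈ p ∧ (∀ x ∈ p, x ∈ R j) ∧
      ∀ m, m ≤ j → c m ≠ b → ∃ t, (t = t1 ∨ t = t2) ∧ G.Av (c m) b t := by
    intro j hj v hv
    rcases Nat.lt_or_eq_of_le hj with hj | rfl
    · rw [hR j hj] at hv ⊢
      obtain ⟨p, hp, hv⟩ := hv
      exact ⟨p, _, hp, hv, fun x hx => ⟨p, hp, hx⟩, fun m hm _ => hN m (j+1) (by omega) hj⟩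
    · rw [hRk] at hv ⊢
      obtain ⟨p, hp, hv⟩ := hv
      have hp' := hp
      rcases hp with hp | hp
      · exact ⟨p, _, hp, hv, fun x hx => ⟨p, hp', hx⟩,
          fun m hm h => ⟨t1, Or.inl rfl, h.symm, Relation.ReflTransGen.refl⟩⟩
      · exact ⟨p, _, hp, hv, fun x hx => ⟨p, hp', hx⟩,
          fun m hm h => ⟨t2, Or.inr rfl, h.symm, Relation.ReflTransGen.refl⟩⟩
  have hS : ∀ j, j ≤ k → ∀ v ∈ R j, v ≠ c j → ∃ t, (t = t1 ∨ t = t2) ∧ G.Av (c j) v t := by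
    intro j hj v hv hvj
    obtain ⟨p, b, hp, hvp, _, hb⟩ := hRj j hj v hv
    obtain ⟨p1, p2, _, hp2, _, _, _, hn⟩ := hp.split hvp
    have hn := hn hvj
    obtain ⟨t, ht, hav⟩ := hb j le_rfl (fun h => hn (h ▸ hp2.last_mem))
    exact ⟨t, ht, (hp2.av hn).trans hav⟩
  have hA : ∀ m j, m < j → j ≤ k → c m ∉ R j := by
    intro m j hm hj h
    obtain ⟨t, ht, hav⟩ := hS j hj _ h (by
      intro h
      have := hinj _ _ (by omega) (by omega) h
      omega)
    exact hC m j hm hj t ht hav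
  have hS2 : ∀ m j, m ≤ j → j ≤ k → ∀ v ∈ R j, v ≠ c m →
      ∃ t, (t = t1 ∨ t = t2) ∧ G.Av (c m) v t := by
    intro m j hm hj v hv hvm
    rcases Nat.lt_or_eq_of_le hm with hm | rfl
    · obtain ⟨p, b, hp, hvp, hs, hb⟩ := hRj j hj v hv
      obtain ⟨p1, p2, _, hp2, _, hs2, _⟩ := hp.split hvp
      have hn : c m ∉ p2 := fun h => hA m j hm hj (hs _ (hs2 _ h))
      obtain ⟨t, ht, hav⟩ := hb m hm.le (fun h => hn (h ▸ hp2.last_mem))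
      exact ⟨t, ht, (hp2.av hn).trans hav⟩
    · exact hS m hj v hv hvm
  have hmain : ∀ i j, i < j → j ≤ k → ∀ v, v ∈ R i → v ∈ R j → v = c (i+1) := by
    intro i j hij hj v hvi hvj
    by_contra hv
    obtain ⟨t, ht, hav⟩ := hS2 (i+1) j hij hj v hvj hv
    rw [hR i (by omega)] at hvi
    obtain ⟨p, hp, hvp⟩ := hvi
    obtain ⟨p1, p2, hp1, _, _, _, hn, _⟩ := hp.split hvp
    exact hC i (i+1) (by omega) (by omega) t ht ((hp1.av (hn hv)).trans hav)
  intro i j hij hj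
  constructor
  · rintro rfl
    ext v
    constructor
    · rintro ⟨h1, h2⟩
      exact hmain i (i+1) hij hj v h1 h2
    · rintro rfl
      obtain ⟨⟨p, q, _, hp, _⟩, _⟩ := hc i hj
      refine ⟨?_, ?_⟩
      · rw [hR i hj]
        exact ⟨p, hp, hp.last_mem⟩
      · rcases Nat.lt_or_eq_of_le hj with hj' | hj'
        · rw [hR _ hj']
          obtain ⟨⟨p, q, _, hp, _⟩, _⟩ := hc (i+1) hj'
          exact ⟨p, hp, hp.head_mem⟩
        · rw [show i + 1 = k from hj'] at hp ⊢
          rw [hRk]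
          rcases hend with ⟨h, _⟩ | ⟨p, q, hp, hq, hd⟩
          · refine ⟨[c k], Or.inl ⟨⟨by simp, by simp, List.isChain_singleton _, ?_⟩, by simp,
              by simp [h]⟩, by simp⟩
            intro x hx
            rw [List.mem_singleton.1 hx]
            exact hp.1.2.2.2 _ hp.last_mem
          · exact ⟨p, Or.inl hp, hp.head_mem⟩
  · intro h
    ext v
    simp only [Set.mem_inter_iff, Set.mem_empty_iff_false, iff_false]
    rintro ⟨h1, h2⟩
    have := hmain i j hij hj v h1 h2
    subst this
    exact hA (i+1) j h hj h2
end

section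
/- Let G be a digraph, s, t1, t2 ∈ V(G) with s ∉ {t1, t2} and t1 ≠ t2, and let c_0, c_1, …, c_k be a sequence of cut vertices between s and t1, t2 whose entries are pairwise distinct. For each 0 ≤ j ≤ k−1 let P_j^1 and P_j^2 be internally vertex-disjoint directed paths from c_j to c_{j+1}, and let P_k^1 and P_k^2 be internally vertex-disjoint directed paths from c_k to t1 and from c_k to t2, respectively. Then the concatenation P^1 = P_0^1 P_1^1 ⋯ P_k^1 is a directed path from s to t1, the concatenation P^2 = P_0^2 P_1^2 ⋯ P_k^2 is a directed path from s to t2, and V(P^1) ∩ V(P^2) = {c_0, c_1, …, c_k}. -/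
/-- Concatenation of a list of paths, where the last vertex of each path equals
the first vertex of the next: traverse the first path, then each subsequent path
without repeating its first vertex. -/
def glue {V : Type*} : List (List V) → List V
  | [] => []
  | p :: ps => p ++ (ps.map List.tail).flatten

namespace Aux4

variable {V : Type*}

def EA (G : Dgraph V) (d : V) (x y : V) : Prop := G.Edge x y ∧ x ≠ d ∧ y ≠ d

def Av (G : Dgraph V) (t1 t2 x d : V) : Prop :=
  x ≠ d ∧ ∃ t, (t = t1 ∨ t = t2) ∧ Relation.ReflTransGen (EA G d) x t

lemma chain_reach (r : V → V → Prop) (b : V) : ∀ (l : List V) (v : V),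
    List.IsChain r (v :: l) → (v :: l).getLast? = some b → Relation.ReflTransGen r v b
  | [], v, _, h => by
      simp at h; subst h; exact Relation.ReflTransGen.refl
  | w :: l, v, hc, h => by
      rw [List.isChain_cons_cons] at hc
      exact Relation.ReflTransGen.head hc.1 (chain_reach r b l w hc.2 (by simpa using h))

lemma chain_avoid (G : Dgraph V) (d : V) : ∀ (l : List V),
    List.IsChain G.Edge l → d ∉ l → List.IsChain (EA G d) l
  | [], _, _ => by simp
  | [v], _, _ => by simp
  | v :: w :: l, hc, hd => by
      rw [List.isChain_cons_cons] at hc ⊢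
      simp only [List.mem_cons, not_or] at hd
      refine ⟨⟨hc.1, Ne.symm hd.1, Ne.symm hd.2.1⟩, chain_avoid G d _ hc.2 ?_⟩
      simp [hd]

lemma reach_path (r : V → V → Prop) {x y : V} (h : Relation.ReflTransGen r x y) :
    ∃ l : List V, (x :: l).Nodup ∧ List.IsChain r (x :: l) ∧ (x :: l).getLast? = some y := by
  induction h using Relation.ReflTransGen.head_induction_on with
  | refl => exact ⟨[], by simp, by simp, by simp⟩
  | @head x z hxz _ ih =>
    obtain ⟨l, h1, h2, h3⟩ := ih
    by_cases hx : x ∈ z :: l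
    · obtain ⟨a, b, hab⟩ := List.append_of_mem hx
      rw [hab] at h1 h2 h3
      refine ⟨b, (List.nodup_append.1 h1).2.1, (List.isChain_append.1 h2).2.1, ?_⟩
      rw [List.getLast?_append_of_ne_nil _ (by simp)] at h3
      exact h3
    · exact ⟨z :: l, List.nodup_cons.2 ⟨hx, h1⟩, List.isChain_cons_cons.2 ⟨hxz, h2⟩, by simpa using h3⟩

/-- suffix -/
lemma suffix_reach (G : Dgraph V) {p : List V} {a b v d : V} (hp : G.PathFrom p a b)
    (hv : v ∈ p) (hd : d ∈ p → d = a ∧ v ≠ a) : Relation.ReflTransGen (EA G d) v b := by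
  obtain ⟨⟨_, hn, hc, _⟩, hh, hl⟩ := hp
  obtain ⟨l1, l2, rfl⟩ := List.append_of_mem hv
  have hc : List.IsChain G.Edge (l1 ++ v :: l2) := hc
  rw [List.getLast?_append_of_ne_nil _ (by simp)] at hl
  refine chain_reach _ _ l2 v (chain_avoid G d _ (List.isChain_append.1 hc).2.1 ?_) hl
  intro hd'
  obtain ⟨h1, h2⟩ := hd (by simp at hd' ⊢; tauto)
  subst h1
  cases l1 with
  | nil => simp at hh; exact h2 hh
  | cons w l1 =>
    simp at hh
    subst hh
    rw [List.cons_append, List.nodup_cons] at hn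
    exact hn.1 (by simp at hd' ⊢; tauto)

/-- prefix -/
lemma prefix_reach (G : Dgraph V) {p : List V} {a b v : V} (hp : G.PathFrom p a b)
    (hv : v ∈ p) (hvb : v ≠ b) : a ≠ b ∧ Relation.ReflTransGen (EA G b) a v := by
  obtain ⟨⟨_, hn, hc, _⟩, hh, hl⟩ := hp
  obtain ⟨l1, l2, rfl⟩ := List.append_of_mem hv
  have hc : List.IsChain G.Edge (l1 ++ v :: l2) := hc
  rw [List.getLast?_append_of_ne_nil _ (by simp)] at hl
  have hb : b ∈ v :: l2 := List.mem_of_getLast? hl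
  have hb1 : b ∉ l1 := fun h => (List.nodup_append.1 hn).2.2 b h b hb rfl
  have hc' : List.IsChain G.Edge (l1 ++ [v]) := by
    have : l1 ++ v :: l2 = (l1 ++ [v]) ++ l2 := by simp
    rw [this] at hc
    exact (List.isChain_append.1 hc).1
  have hca := chain_avoid G b _ hc' (by simp; exact ⟨hb1, Ne.symm hvb⟩)
  cases l1 with
  | nil => simp at hh; subst hh; exact ⟨hvb, Relation.ReflTransGen.refl⟩
  | cons w l1 =>
    simp at hh
    subst hh
    refine ⟨?_, chain_reach _ _ (l1 ++ [v]) w hca ?_⟩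
    · rintro rfl; exact hb1 (by simp)
    · rw [← List.cons_append, List.getLast?_append_of_ne_nil _ (by simp)]; simp

lemma reach_pathFrom (G : Dgraph V) (r : V → V → Prop) (hr : ∀ x y, r x y → G.Edge x y)
    {x y : V} (hx : x ∈ G.verts) (h : Relation.ReflTransGen r x y) :
    ∃ p : List V, G.PathFrom p x y ∧ List.IsChain r p := by
  obtain ⟨l, h1, h2, h3⟩ := reach_path r h
  have h4 : List.IsChain G.Edge (x :: l) := h2.imp hr
  refine ⟨x :: l, ⟨⟨by simp, h1, h4, ?_⟩, by simp, h3⟩, h2⟩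
  clear h1 h2 h3 h
  induction l generalizing x with
  | nil => simpa using hx
  | cons w l ih =>
    rw [List.isChain_cons_cons] at h4
    have := ih (G.mem_of_edge h4.1).2 h4.2
    intro v hv
    rcases List.mem_cons.1 hv with rfl | hv
    · exact hx
    · exact this v hv

lemma head_mem (G : Dgraph V) {p : List V} {a b : V} (hp : G.PathFrom p a b) : a ∈ p :=
  List.mem_of_head? hp.2.1

lemma last_mem (G : Dgraph V) {p : List V} {a b : V} (hp : G.PathFrom p a b) : b ∈ p :=
  List.mem_of_getLast? hp.2.2

lemma chain_not_mem (G : Dgraph V) (d : V) : ∀ (l : List V) (v : V), v ≠ d →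
    List.IsChain (EA G d) (v :: l) → d ∉ v :: l
  | [], v, h, _ => by simpa using Ne.symm h
  | w :: l, v, h, hc => by
      rw [List.isChain_cons_cons] at hc
      have := chain_not_mem G d l w hc.1.2.2 hc.2
      rw [List.mem_cons, not_or]
      exact ⟨Ne.symm h, this⟩

lemma append_path (G : Dgraph V) {p q : List V} {a b d : V} (hp : G.PathFrom p a b)
    (hq : G.PathFrom q b d) (hd : ∀ v ∈ p, v ∈ q → v = b) :
    G.PathFrom (p ++ q.tail) a d ∧ ∀ v, v ∈ p ++ q.tail ↔ v ∈ p ∨ v ∈ q := by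
  have hbp := last_mem G hp
  obtain ⟨⟨hp0, hpn, hpc, hpv⟩, hph, hpl⟩ := hp
  obtain ⟨⟨hq0, hqn, hqc, hqv⟩, hqh, hql⟩ := hq
  cases q with
  | nil => exact absurd rfl hq0
  | cons x q =>
    simp at hqh
    subst hqh
    have hqc : List.IsChain G.Edge (x :: q) := hqc
    have hpc : List.IsChain G.Edge p := hpc
    rw [List.nodup_cons] at hqn
    rw [List.isChain_cons] at hqc
    simp only [List.tail_cons]
    refine ⟨⟨⟨by simp [hp0], ?_, ?_, ?_⟩, ?_, ?_⟩, ?_⟩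
    · rw [List.nodup_append]
      refine ⟨hpn, hqn.2, ?_⟩
      rintro u hu w hw rfl
      have := hd u hu (List.mem_cons_of_mem _ hw)
      subst this
      exact hqn.1 hw
    · show List.IsChain G.Edge (p ++ q)
      rw [List.isChain_append]
      refine ⟨hpc, hqc.2, ?_⟩
      intro u hu w hw
      rw [hpl] at hu
      simp at hu
      subst hu
      exact hqc.1 w hw
    · intro v hv
      rcases List.mem_append.1 hv with h | h
      · exact hpv v h
      · exact hqv v (List.mem_cons_of_mem _ h)
    · rw [List.head?_append, hph]; simp
    · cases q with
      | nil => simp at hql; subst hql; simpa using hpl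
      | cons y q =>
        rw [List.getLast?_append_of_ne_nil _ (by simp)]
        simpa using hql
    · intro v
      simp only [List.mem_append, List.mem_cons]
      constructor
      · tauto
      · rintro (h | rfl | h)
        · exact Or.inl h
        · exact Or.inl hbp
        · exact Or.inr h

lemma glue_path (G : Dgraph V) (k : ℕ) (e : ℕ → V) (P : ℕ → List V)
    (hP : ∀ j ≤ k, G.PathFrom (P j) (e j) (e (j + 1)))
    (hd : ∀ i j, j < i → i ≤ k → ∀ v, v ∈ P j → v ∈ P i → v = e i) :
    ∀ n ≤ k, G.PathFrom (glue ((List.range (n + 1)).map P)) (e 0) (e (n + 1)) ∧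
      ∀ v, v ∈ glue ((List.range (n + 1)).map P) ↔ ∃ j ≤ n, v ∈ P j := by
  intro n
  induction n with
  | zero => intro h; simpa [glue] using hP 0 h
  | succ n ih =>
    intro h
    obtain ⟨h1, h2⟩ := ih (by omega)
    have hg : glue ((List.range (n + 1 + 1)).map P)
        = glue ((List.range (n + 1)).map P) ++ (P (n + 1)).tail := by
      rw [List.range_succ, List.map_append, List.range_succ_eq_map]
      simp [glue]
    rw [hg]
    have := append_path G h1 (hP (n + 1) h) (by
      intro v hv hv'
      obtain ⟨j, hj, hvj⟩ := (h2 v).1 hv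
      exact hd (n + 1) j (by omega) h v hvj hv')
    refine ⟨this.1, fun v => ?_⟩
    rw [this.2, h2]
    constructor
    · rintro (⟨j, hj, hv⟩ | hv)
      · exact ⟨j, by omega, hv⟩
      · exact ⟨n + 1, le_rfl, hv⟩
    · rintro ⟨j, hj, hv⟩
      rcases Nat.lt_or_ge j (n + 1) with h' | h'
      · exact Or.inl ⟨j, by omega, hv⟩
      · obtain rfl : j = n + 1 := by omega
        exact Or.inr hv

lemma mem_int (G : Dgraph V) {p : List V} {a b v : V} (hp : G.PathFrom p a b) (hv : v ∈ p) :
    v = a ∨ v = b ∨ v ∈ Dgraph.internals p := by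
  obtain ⟨⟨_, hn, _, _⟩, hh, hl⟩ := hp
  cases p with
  | nil => simp at hv
  | cons x p =>
    simp at hh; subst hh
    rcases List.mem_cons.1 hv with h | h
    · exact Or.inl h
    · right
      have hp : p ≠ [] := List.ne_nil_of_mem h
      have h' := List.dropLast_append_getLast hp
      rw [← h'] at h
      rcases List.mem_append.1 h with h | h
      · exact Or.inr h
      · left
        simp at h
        rw [List.getLast?_cons_of_ne_nil hp, List.getLast?_eq_some_getLast hp] at hl
        simp at hl
        rw [h, hl]

end Aux4

open Aux4 in
/-- Let `c 0, …, c k` be a sequence of cut vertices between `s`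
and `t1, t2` (`t1 ≠ t2`) with pairwise distinct entries, let `P¹ j, P² j` be
internally vertex-disjoint paths from `c j` to `c (j+1)` for `j < k`, and let
`P¹ k, P² k` be internally vertex-disjoint paths from `c k` to `t1` and `t2`.
Then the concatenation `Q1` of the `P¹ j` is a directed path from `s` to `t1`,
the concatenation `Q2` of the `P² j` is a directed path from `s` to `t2`, and
`V(Q1) ∩ V(Q2) = {c 0, …, c k}`. -/
theorem stmt4 {V : Type*} (G : Dgraph V) (s t1 t2 : V)
    (hs1 : s ≠ t1) (hs2 : s ≠ t2) (ht : t1 ≠ t2)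
    (k : ℕ) (c : ℕ → V)
    (hcut : G.IsCutSeq s t1 t2 k c)
    (hinj : ∀ i j, i ≤ k → j ≤ k → c i = c j → i = j)
    (P1 P2 : ℕ → List V)
    (hP : ∀ j < k, G.PathFrom (P1 j) (c j) (c (j + 1)) ∧
        G.PathFrom (P2 j) (c j) (c (j + 1)) ∧ Dgraph.IntDisjoint (P1 j) (P2 j))
    (hPk1 : G.PathFrom (P1 k) (c k) t1) (hPk2 : G.PathFrom (P2 k) (c k) t2)
    (hPkdisj : Dgraph.IntDisjoint (P1 k) (P2 k))
    (Q1 Q2 : List V)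
    (hQ1 : Q1 = glue ((List.range (k + 1)).map P1))
    (hQ2 : Q2 = glue ((List.range (k + 1)).map P2)) :
    G.PathFrom Q1 s t1 ∧ G.PathFrom Q2 s t2 ∧
    {v | v ∈ Q1 ∧ v ∈ Q2} = {v | ∃ i ≤ k, v = c i} := by
  obtain ⟨hc0, hcut, -⟩ := hcut
  have hverts : ∀ i ≤ k, c i ∈ G.verts := by
    intro i hi
    rcases Nat.lt_or_ge i k with h | h
    · exact (hP i h).1.1.2.2.2 _ (head_mem G (hP i h).1)
    · obtain rfl : i = k := by omega
      exact hPk1.1.2.2.2 _ (head_mem G hPk1)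
  -- (1)
  have H1 : ∀ n j i, i = j + 1 + n → i ≤ k → ¬ Av G t1 t2 (c j) (c i) := by
    intro n
    induction n with
    | zero =>
      rintro j i hi hik ⟨hne, t, ht, hr⟩
      obtain ⟨p, hp, hpc⟩ := reach_pathFrom G _ (fun x y h => h.1) (hverts j (by omega)) hr
      have hm : c (j + 1) ∈ p := (hcut j (by omega)).2 p (by
        rcases ht with rfl | rfl
        · exact Or.inl hp
        · exact Or.inr hp)
      have hij : i = j + 1 := by omega
      subst hij
      obtain ⟨_, hh, _⟩ := hp
      cases p with
      | nil => simp at hm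
      | cons x p =>
        simp at hh; subst hh
        exact chain_not_mem G _ p _ hne hpc hm
    | succ n ih =>
      rintro j i hi hik ⟨hne, t, ht, hr⟩
      obtain ⟨p, hp, hpc⟩ := reach_pathFrom G _ (fun x y h => h.1) (hverts j (by omega)) hr
      have hm : c (j + 1) ∈ p := (hcut j (by omega)).2 p (by
        rcases ht with rfl | rfl
        · exact Or.inl hp
        · exact Or.inr hp)
      have hnp : c i ∉ p := by
        obtain ⟨_, hh, _⟩ := hp
        cases p with
        | nil => simp at hm
        | cons x p =>
          simp at hh; subst hh
          exact chain_not_mem G _ p _ hne hpc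
      refine ih (j + 1) i (by omega) hik ⟨?_, t, ht, suffix_reach G hp hm (fun h => absurd h hnp)⟩
      intro h
      exact hnp (h ▸ hm)
  have H1' : ∀ j i, j < i → i ≤ k → ¬ Av G t1 t2 (c j) (c i) := fun j i h h' =>
    H1 (i - j - 1) j i (by omega) h'
  -- reach
  have hreach : ∀ n i, i + n = k → Relation.ReflTransGen G.Edge (c i) t1 := by
    have gen : ∀ (p : List V) a b, G.PathFrom p a b → Relation.ReflTransGen G.Edge a b := by
      intro p a b hp
      obtain ⟨⟨h0, _, hc, _⟩, hh, hl⟩ := hp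
      cases p with
      | nil => exact absurd rfl h0
      | cons x p =>
        simp at hh; subst hh
        exact chain_reach _ _ p x hc hl
    intro n
    induction n with
    | zero => rintro i rfl; exact gen _ _ _ hPk1
    | succ n ih =>
      intro i hi
      exact (gen _ _ _ (hP i (by omega)).1).trans (ih (i + 1) (by omega))
  -- (2)
  have H2 : ∀ j i, j < i → i ≤ k → Av G t1 t2 (c i) (c j) := by
    intro j i hji hik
    have hne : c i ≠ c j := fun h => by have := hinj i j hik (by omega) h; omega
    obtain ⟨p, hp, -⟩ := reach_pathFrom G _ (fun x y h => h) (hverts i hik)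
      (hreach (k - i) i (by omega))
    have hnp : c j ∉ p := fun hm =>
      H1' j i hji hik ⟨hne.symm, t1, Or.inl rfl, suffix_reach G hp hm (fun _ => ⟨rfl, hne.symm⟩)⟩
    exact ⟨hne, t1, Or.inl rfl, suffix_reach G hp (head_mem G hp) (fun h => absurd h hnp)⟩
  let Seg : ℕ → List V → Prop := fun i p => ∃ e, G.PathFrom p (c i) e ∧
    ((i < k ∧ e = c (i + 1)) ∨ (i = k ∧ (e = t1 ∨ e = t2)))
  have H3a : ∀ i p m v, Seg i p → i ≤ k → m ≤ i → v ∈ p → v ≠ c m →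
      (c m ∈ p → c m = c i ∧ v ≠ c i) → Av G t1 t2 v (c m) := by
    rintro i p m v ⟨e, hp, he⟩ hik hmi hv hvm hd
    have hr := suffix_reach G hp hv hd
    rcases he with ⟨hik', rfl⟩ | ⟨rfl, he⟩
    · obtain ⟨_, t, ht, hr'⟩ := H2 m (i + 1) (by omega) (by omega)
      exact ⟨hvm, t, ht, hr.trans hr'⟩
    · exact ⟨hvm, e, he, hr⟩
  have H3b : ∀ i p m, Seg i p → i ≤ k → m < i → c m ∉ p := by
    intro i p m hs hik hmi hm
    have hne : c m ≠ c i := fun h => by have := hinj m i (by omega) hik h; omega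
    exact H1' m i hmi hik (H3a i p i (c m) hs hik le_rfl hm hne (fun _ => ⟨rfl, hne⟩))
  have H3 : ∀ i p m v, Seg i p → i ≤ k → m ≤ i → v ∈ p → v ≠ c m → Av G t1 t2 v (c m) := by
    intro i p m v hs hik hmi hv hvm
    refine H3a i p m v hs hik hmi hv hvm (fun hm => ?_)
    rcases Nat.lt_or_ge m i with h | h
    · exact absurd hm (H3b i p m hs hik h)
    · obtain rfl : m = i := by omega
      exact ⟨rfl, hvm⟩
  have H5 : ∀ i j p q v, Seg j p → Seg i q → j < i → i ≤ k → v ∈ p → v ∈ q → v = c i := by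
    intro i j p q v hsp hsq hji hik hvp hvq
    have hv : v = c (j + 1) := by
      by_contra hne
      obtain ⟨_, t, ht, hr⟩ := H3 i q (j + 1) v hsq hik (by omega) hvq hne
      obtain ⟨e, hp, he⟩ := hsp
      rcases he with ⟨_, rfl⟩ | ⟨h, _⟩
      · obtain ⟨h1, h2⟩ := prefix_reach G hp hvp hne
        exact H1' j (j + 1) (by omega) (by omega) ⟨h1, t, ht, h2.trans hr⟩
      · omega
    rcases Nat.lt_or_ge (j + 1) i with h | h
    · exact absurd (hv ▸ hvq) (H3b i q (j + 1) hsq hik h)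
    · obtain rfl : i = j + 1 := by omega
      exact hv
  have S1 : ∀ j ≤ k, Seg j (P1 j) := by
    intro j hj
    rcases Nat.lt_or_ge j k with h | h
    · exact ⟨_, (hP j h).1, Or.inl ⟨h, rfl⟩⟩
    · obtain rfl : j = k := by omega
      exact ⟨_, hPk1, Or.inr ⟨rfl, Or.inl rfl⟩⟩
  have S2 : ∀ j ≤ k, Seg j (P2 j) := by
    intro j hj
    rcases Nat.lt_or_ge j k with h | h
    · exact ⟨_, (hP j h).2.1, Or.inl ⟨h, rfl⟩⟩
    · obtain rfl : j = k := by omega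
      exact ⟨_, hPk2, Or.inr ⟨rfl, Or.inr rfl⟩⟩
  have main : ∀ (P : ℕ → List V) (t : V), (∀ j ≤ k, Seg j (P j)) →
      (∀ j < k, G.PathFrom (P j) (c j) (c (j + 1))) → G.PathFrom (P k) (c k) t →
      G.PathFrom (glue ((List.range (k + 1)).map P)) s t ∧
      ∀ v, v ∈ glue ((List.range (k + 1)).map P) ↔ ∃ j ≤ k, v ∈ P j := by
    intro P t hS hPj hPk
    have := glue_path G k (fun n => if n ≤ k then c n else t) P (by
      intro j hj
      rcases Nat.lt_or_ge j k with h | h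
      · simpa [hj, Nat.succ_le_of_lt h] using hPj j h
      · obtain rfl : j = k := by omega
        simpa using hPk) (by
      intro i j hji hik v hv hv'
      simpa [hik] using H5 i j _ _ v (hS j (by omega)) (hS i hik) hji hik hv hv') k le_rfl
    simpa [hc0] using this
  obtain ⟨A1, B1⟩ := main P1 t1 S1 (fun j h => (hP j h).1) hPk1
  obtain ⟨A2, B2⟩ := main P2 t2 S2 (fun j h => (hP j h).2.1) hPk2
  subst hQ1 hQ2
  refine ⟨A1, A2, ?_⟩
  ext v
  simp only [Set.mem_setOf_eq, B1, B2]
  constructor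
  · rintro ⟨⟨i, hi, hvi⟩, ⟨j, hj, hvj⟩⟩
    rcases lt_trichotomy i j with h | h | h
    · exact ⟨j, hj, H5 j i _ _ v (S1 i hi) (S2 j hj) h hj hvi hvj⟩
    · subst h
      rcases Nat.lt_or_ge i k with h | h
      · obtain ⟨p1, p2, pd⟩ := hP i h
        rcases mem_int G p1 hvi with h' | h' | h'
        · exact ⟨i, hi, h'⟩
        · exact ⟨i + 1, h, h'⟩
        · exact absurd ⟨hvi, hvj⟩ (pd v (Or.inl h'))
      · obtain rfl : i = k := by omega
        rcases mem_int G hPk1 hvi with h1 | h1 | h1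
        · exact ⟨i, hi, h1⟩
        · rcases mem_int G hPk2 hvj with h2 | h2 | h2
          · exact ⟨i, hi, h2⟩
          · exact absurd (h1.symm.trans h2) ht
          · exact absurd ⟨hvi, hvj⟩ (hPkdisj v (Or.inr h2))
        · exact absurd ⟨hvi, hvj⟩ (hPkdisj v (Or.inl h1))
    · exact ⟨i, hi, H5 i j _ _ v (S2 j hj) (S1 i hi) h hi hvj hvi⟩
  · rintro ⟨i, hi, rfl⟩
    obtain ⟨_, h1, _⟩ := S1 i hi
    obtain ⟨_, h2, _⟩ := S2 i hi
    exact ⟨⟨i, hi, head_mem G h1⟩, ⟨i, hi, head_mem G h2⟩⟩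
end

section
/- Let G be a digraph and let x1, x2, y1, y2, y3, y4 be vertices of G with x1 ∉ {y1, y2}. Let P1, P2, P3, P4 be directed paths in G such that P1 goes from x1 to y1, P2 goes from x1 to y2, P3 goes from x2 to y3, P4 goes from x2 to y4, and every vertex of G lies on at most two of the four paths. Let D ⊆ V(P3) ∩ V(P4), and let c_0, c_1, …, c_m be a sequence of cut vertices between x1 and y1, y2 in the digraph G − D obtained from G by deleting all vertices of D. Then {c_0, c_1, …, c_m} ⊆ V(P1) ∩ V(P2). -/
theorem Dgraph.suffix_aux {V : Type*} (G : Dgraph V) (D : Set V) (P : List V) (x y v w : V)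
    (h : G.PathFrom P x y) (hd : ∀ z ∈ P, z ∉ D) (hv : v ∈ P)
    (hw : ∀ p : List V, (G.delete D).PathFrom p v y → w ∈ p) : w ∈ P := by
  obtain ⟨⟨_, hnd, hch, hvs⟩, _, hl⟩ := h
  obtain ⟨s, t, rfl⟩ := List.append_of_mem hv
  have hsub : ∀ z ∈ v :: t, z ∈ s ++ v :: t := fun z hz => List.mem_append_right _ hz
  refine hsub _ (hw (v :: t) ⟨⟨by simp, (List.nodup_append.1 hnd).2.1, ?_, ?_⟩, by simp, ?_⟩)
  · have h2 : List.IsChain G.Edge (v :: t) := (List.isChain_append.1 hch).2.1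
    have h3 : List.IsChain (G.delete D).Edge (v :: t) := by
      refine List.IsChain.imp_of_mem_imp ?_ h2
      intro a b ha hb hab
      exact ⟨hab, hd _ (hsub _ ha), hd _ (hsub _ hb)⟩
    exact h3
  · intro z hz
    exact ⟨hvs _ (hsub _ hz), hd _ (hsub _ hz)⟩
  · rw [← hl, List.getLast?_append_of_ne_nil]
    simp

/-- Let `P1, P2, P3, P4` be paths from `x1` to `y1`, from `x1`
to `y2`, from `x2` to `y3`, and from `x2` to `y4` respectively, such that every
vertex lies on at most two of the four paths.  Let `D ⊆ V(P3) ∩ V(P4)` and let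
`c 0, …, c m` be a sequence of cut vertices between `x1` and `y1, y2` in
`G − D`.  Then every `c i` lies on both `P1` and `P2`. -/
theorem stmt7 {V : Type*} [DecidableEq V] (G : Dgraph V) (x1 x2 y1 y2 y3 y4 : V)
    (hx1 : x1 ≠ y1) (hx2 : x1 ≠ y2)
    (P1 P2 P3 P4 : List V)
    (h1 : G.PathFrom P1 x1 y1) (h2 : G.PathFrom P2 x1 y2)
    (h3 : G.PathFrom P3 x2 y3) (h4 : G.PathFrom P4 x2 y4)
    (hcong : ∀ z : V,
      (if z ∈ P1 then 1 else 0) + (if z ∈ P2 then 1 else 0) +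
      (if z ∈ P3 then 1 else 0) + (if z ∈ P4 then 1 else 0) ≤ 2)
    (D : Set V) (hD : ∀ v ∈ D, v ∈ P3 ∧ v ∈ P4)
    (m : ℕ) (c : ℕ → V)
    (hcut : (G.delete D).IsCutSeq x1 y1 y2 m c) :
    ∀ i ≤ m, c i ∈ P1 ∧ c i ∈ P2 := by
  have hd1 : ∀ z ∈ P1, z ∉ D := by
    intro z hz hzD
    have := hcong z
    simp [hz, hD z hzD] at this
  have hd2 : ∀ z ∈ P2, z ∉ D := by
    intro z hz hzD
    have := hcong z
    simp [hz, hD z hzD] at this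
  obtain ⟨h0, hs, _⟩ := hcut
  intro i
  induction i with
  | zero =>
    intro _
    rw [h0]
    exact ⟨List.mem_of_mem_head? h1.2.1, List.mem_of_mem_head? h2.2.1⟩
  | succ j ih =>
    intro hj
    obtain ⟨a, b⟩ := ih (by omega)
    have hc := (hs j (by omega)).2
    exact ⟨G.suffix_aux D P1 _ _ _ _ h1 hd1 a fun p hp => hc p (Or.inl hp),
      G.suffix_aux D P2 _ _ _ _ h2 hd2 b fun p hp => hc p (Or.inr hp)⟩
end

section
/- Let G be a digraph and let x1, x2, y1, y2, y3, y4 be vertices of G with x1 ∉ {y1, y2}, x2 ∉ {y3, y4}, y1 ≠ y2, and y3 ≠ y4. Suppose c_0, c_1, …, c_p is a sequence of cut vertices, with pairwise distinct entries, between x1 and y1, y2 in the digraph G − {d_0, d_1, …, d_q}, and simultaneously d_0, d_1, …, d_q is a sequence of cut vertices, with pairwise distinct entries, between x2 and y3, y4 in the digraph G − {c_0, c_1, …, c_p}. Then there exist directed paths Q1 from x1 to y1, Q2 from x1 to y2, Q3 from x2 to y3, and Q4 from x2 to y4 in G such that every vertex of G lies on at most two of the four paths. -/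
namespace CutAux

open Relation

variable {V : Type*}

theorem rtg_mono {r r' : V → V → Prop} {a b : V} (h : ∀ x y, r x y → r' x y)
    (hab : ReflTransGen r a b) : ReflTransGen r' a b := by
  induction hab with
  | refl => exact ReflTransGen.refl
  | tail _ h2 ih => exact ih.tail (h _ _ h2)

theorem chain_rtg (r : V → V → Prop) (l : List V) (a b : V)
    (hc : l.IsChain r) (h1 : l.head? = some a) (h2 : l.getLast? = some b) :
    ReflTransGen (fun x y => r x y ∧ x ∈ l ∧ y ∈ l) a b := by
  induction l generalizing a with
  | nil => simp at h1
  | cons x t ih =>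
    simp only [List.head?_cons, Option.some.injEq] at h1
    subst h1
    cases t with
    | nil =>
      simp only [List.getLast?_singleton, Option.some.injEq] at h2
      subst h2
      exact ReflTransGen.refl
    | cons y t =>
      rw [List.isChain_cons_cons] at hc
      rw [List.getLast?_cons_cons] at h2
      have := ih y hc.2 rfl h2
      refine ReflTransGen.head (b := y) ⟨hc.1, by simp, by simp⟩ ?_
      refine rtg_mono ?_ this
      rintro u v ⟨h, hu, hv⟩
      exact ⟨h, List.mem_cons_of_mem _ hu, List.mem_cons_of_mem _ hv⟩

theorem rtg_chain (r : V → V → Prop) (a b : V) (h : ReflTransGen r a b) :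
    ∃ l : List V, l.Nodup ∧ l.IsChain r ∧ l.head? = some a ∧ l.getLast? = some b := by
  classical
  induction h using ReflTransGen.head_induction_on with
  | refl => exact ⟨[b], by simp⟩
  | @head a c hac _ ih =>
    obtain ⟨l, hn, hc, h1, h2⟩ := ih
    by_cases ha : a ∈ l
    · obtain ⟨s, t, rfl⟩ := List.append_of_mem ha
      refine ⟨a :: t, ?_, ?_, rfl, ?_⟩
      · exact (List.nodup_append.1 hn).2.1
      · exact (List.isChain_append.1 hc).2.1
      · simpa [List.getLast?_append] using h2
    · cases l with
      | nil => simp at h1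
      | cons x t =>
        simp only [List.head?_cons, Option.some.injEq] at h1
        subst h1
        refine ⟨a :: x :: t, List.nodup_cons.2 ⟨ha, hn⟩, ?_, rfl, ?_⟩
        · exact List.isChain_cons_cons.2 ⟨hac, hc⟩
        · rw [List.getLast?_cons_cons]; exact h2

theorem rtg_path (H : Dgraph V) (r : V → V → Prop) (S : V → Prop) (a b : V)
    (hr : ∀ x y, r x y → H.Edge x y ∧ S y) (ha : a ∈ H.verts) (hS : S a)
    (h : ReflTransGen r a b) :
    ∃ l, H.PathFrom l a b ∧ ∀ z ∈ l, S z := by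
  obtain ⟨l, hn, hc, h1, h2⟩ := rtg_chain r a b h
  have key : ∀ (l : List V) (a : V), a ∈ H.verts → S a → l.IsChain r → l.head? = some a →
      ∀ v ∈ l, v ∈ H.verts ∧ S v := by
    intro l
    induction l with
    | nil => simp
    | cons x t ih =>
      intro a ha hS hc h1 v hv
      simp only [List.head?_cons, Option.some.injEq] at h1
      subst h1
      rcases List.mem_cons.1 hv with rfl | hv
      · exact ⟨ha, hS⟩
      · cases t with
        | nil => simp at hv
        | cons y t =>
          rw [List.isChain_cons_cons] at hc
          have := hr _ _ hc.1
          exact ih y (H.mem_of_edge this.1).2 this.2 hc.2 rfl v hv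
  have k := key l a ha hS hc h1
  refine ⟨l, ⟨⟨?_, hn, ?_, fun v hv => (k v hv).1⟩, h1, h2⟩, fun v hv => (k v hv).2⟩
  · rintro rfl; simp at h1
  · exact List.IsChain.imp (fun x y hxy => (hr x y hxy).1) hc

/-- `v` reaches `w` avoiding `u`, after the start. -/
def Av (H : Dgraph V) (u v w : V) : Prop :=
  ReflTransGen (fun x y => H.Edge x y ∧ y ≠ u) v w

theorem suffix_av (H : Dgraph V) (l : List V) (a b z : V) (h : H.PathFrom l a b)
    (hz : z ∈ l) (hza : z ≠ a) : Av H a z b := by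
  obtain ⟨⟨_, hn, hc, _⟩, h1, h2⟩ := h
  obtain ⟨s, t, rfl⟩ := List.append_of_mem hz
  have hl : (z :: t).getLast? = some b := by simpa [List.getLast?_append] using h2
  have hch : (z :: t).IsChain H.Edge := (List.isChain_append.1 hc).2.1
  have := chain_rtg _ _ z b hch rfl hl
  refine rtg_mono ?_ this
  rintro x y ⟨hxy, _, hy⟩
  refine ⟨hxy, ?_⟩
  rintro rfl
  cases s with
  | nil => simp at h1; exact hza h1
  | cons s0 s =>
    simp at h1
    subst h1
    rw [List.cons_append, List.nodup_cons] at hn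
    exact hn.1 (List.mem_append_right _ hy)

theorem prefix_av (H : Dgraph V) (l : List V) (a b z : V) (h : H.PathFrom l a b)
    (hz : z ∈ l) (hzb : z ≠ b) : Av H b a z := by
  obtain ⟨⟨_, hn, hc, _⟩, h1, h2⟩ := h
  obtain ⟨s, t, rfl⟩ := List.append_of_mem hz
  have e : s ++ z :: t = (s ++ [z]) ++ t := by simp
  rw [e] at hn hc h1 h2
  have hch : (s ++ [z]).IsChain H.Edge := (List.isChain_append.1 hc).1
  have hh : (s ++ [z]).head? = some a := by
    cases s <;> simpa using h1
  have := chain_rtg _ _ a z hch hh (by simp)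
  refine rtg_mono ?_ this
  rintro x y ⟨hxy, _, hy⟩
  refine ⟨hxy, ?_⟩
  rintro rfl
  rcases List.eq_nil_or_concat t with rfl | ⟨t', w, rfl⟩
  · simp at h2; exact hzb h2
  · have hw : w = y := by
      rw [List.concat_eq_append, ← List.append_assoc, List.getLast?_concat] at h2
      simpa using h2
    subst hw
    exact (List.nodup_append.1 hn).2.2 w hy w (by simp) rfl

theorem av_split (H : Dgraph V) (u v w x : V) (h : Av H u v x) :
    Av H w v x ∨ Av H u w x := by
  induction h using ReflTransGen.head_induction_on with
  | refl => exact Or.inl ReflTransGen.refl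
  | @head a c hac hcb ih =>
    rcases ih with ih | ih
    · by_cases hcw : c = w
      · subst hcw; exact Or.inr hcb
      · exact Or.inl (ReflTransGen.head ⟨hac.1, hcw⟩ ih)
    · exact Or.inr ih

theorem av_no (H : Dgraph V) (a u x : V) (hau : a ≠ u) (ha : a ∈ H.verts)
    (hcut : ∀ p, H.PathFrom p a x → u ∈ p) : ¬ Av H u a x := by
  intro h
  obtain ⟨l, hl, hS⟩ := rtg_path H _ (fun z => z ≠ u) a x (fun x y h => h) ha hau h
  exact hS u (hcut l hl) rfl

theorem mem_internal (H : Dgraph V) (l : List V) (a b z : V) (h : H.PathFrom l a b)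
    (hz : z ∈ l) (hza : z ≠ a) (hzb : z ≠ b) : z ∈ Dgraph.internals l := by
  obtain ⟨_, h1, h2⟩ := h
  unfold Dgraph.internals
  cases l with
  | nil => simp at hz
  | cons x t =>
    simp only [List.head?_cons, Option.some.injEq] at h1
    subst h1
    have hz : z ∈ t := by simpa [hza] using hz
    rcases List.eq_nil_or_concat t with rfl | ⟨t', w, rfl⟩
    · simp at hz
    · rw [List.concat_eq_append, ← List.cons_append, List.getLast?_concat] at h2
      simp only [Option.some.injEq] at h2
      subst h2
      simpa [hzb] using hz

theorem path_start (H : Dgraph V) (l : List V) (a b : V) (h : H.PathFrom l a b) :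
    a ∈ l ∧ a ∈ H.verts := by
  obtain ⟨⟨_, _, _, hv⟩, h1, _⟩ := h
  have := List.mem_of_mem_head? h1
  exact ⟨this, hv _ this⟩

theorem route (H : Dgraph V) (k : ℕ) (c e : ℕ → V) (P : ℕ → List V) (t : V)
    (hP : ∀ j ≤ k, H.PathFrom (P j) (c j) (e j))
    (he : ∀ j < k, e j = c (j+1)) (hek : e k = t) (j : ℕ) (hj : j ≤ k) :
    ∃ l, H.PathFrom l (c j) t ∧ ∀ z ∈ l, ∃ i ≤ k, z ∈ P i := by
  have : ReflTransGen (fun x y => H.Edge x y ∧ ∃ i ≤ k, y ∈ P i) (c j) t := by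
    have seg : ∀ j ≤ k, ReflTransGen (fun x y => H.Edge x y ∧ ∃ i ≤ k, y ∈ P i) (c j) (e j) := by
      intro j hj
      have h := hP j hj
      refine rtg_mono ?_ (chain_rtg _ _ _ _ h.1.2.2.1 h.2.1 h.2.2)
      rintro x y ⟨h, _, hy⟩
      exact ⟨h, j, hj, hy⟩
    induction hj using Nat.decreasingInduction with
    | self => exact hek ▸ seg k le_rfl
    | of_succ n hn ih => exact ((he n hn) ▸ seg n hn.le).trans ih
  have h := path_start H _ _ _ (hP j hj)
  exact rtg_path H _ (fun z => ∃ i ≤ k, z ∈ P i) _ _ (fun x y h => h) h.2 ⟨j, hj, h.1⟩ this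

theorem main (H : Dgraph V) (s t1 t2 : V) (k : ℕ) (c : ℕ → V) (ht : t1 ≠ t2)
    (hinj : ∀ i j, i ≤ k → j ≤ k → c i = c j → i = j) (h : H.IsCutSeq s t1 t2 k c) :
    ∃ Q1 Q2, H.PathFrom Q1 s t1 ∧ H.PathFrom Q2 s t2 ∧
      ∀ z, z ∈ Q1 → z ∈ Q2 → ∃ i ≤ k, z = c i := by
  classical
  obtain ⟨h0, hseg, hend⟩ := h
  have hend : ∃ p q : List V, H.PathFrom p (c k) t1 ∧ H.PathFrom q (c k) t2 ∧
      Dgraph.IntDisjoint p q := by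
    rcases hend with h | h
    · exact absurd h.2 ht
    · exact h
  let e1 : ℕ → V := fun j => if j < k then c (j+1) else t1
  let e2 : ℕ → V := fun j => if j < k then c (j+1) else t2
  have he1 : ∀ j < k, e1 j = c (j+1) := fun j hj => if_pos hj
  have he2 : ∀ j < k, e2 j = c (j+1) := fun j hj => if_pos hj
  have he1k : e1 k = t1 := if_neg (lt_irrefl k)
  have he2k : e2 k = t2 := if_neg (lt_irrefl k)
  have hex : ∀ j, ∃ p q : List V, j ≤ k → H.PathFrom p (c j) (e1 j) ∧
      H.PathFrom q (c j) (e2 j) ∧ Dgraph.IntDisjoint p q := by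
    intro j
    rcases lt_trichotomy j k with hj | rfl | hj
    · obtain ⟨p, q, _, hp, hq, hd⟩ := (hseg j hj).1
      refine ⟨p, q, fun _ => ?_⟩
      rw [he1 j hj, he2 j hj]; exact ⟨hp, hq, hd⟩
    · obtain ⟨p, q, hp⟩ := hend
      refine ⟨p, q, fun _ => ?_⟩
      rw [he1k, he2k]; exact hp
    · exact ⟨[], [], fun h => absurd h (by omega)⟩
  choose P P' hPP using hex
  have r1 := route H k c e1 P t1 (fun j hj => (hPP j hj).1) he1 he1k
  have r2 := route H k c e2 P' t2 (fun j hj => (hPP j hj).2.1) he2 he2k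
  have hv : ∀ j ≤ k, c j ∈ H.verts := fun j hj => (path_start H _ _ _ (hPP j hj).1).2
  let A : V → V → Prop := fun u v => Av H u v t1 ∨ Av H u v t2
  have Asplit : ∀ u v w, A u v → A w v ∨ A u w := by
    intro u v w h
    rcases h with h | h
    · rcases av_split H u v w _ h with h | h
      · exact Or.inl (Or.inl h)
      · exact Or.inr (Or.inl h)
    · rcases av_split H u v w _ h with h | h
      · exact Or.inl (Or.inr h)
      · exact Or.inr (Or.inr h)
  have Atr : ∀ u v w, Av H u v w → A u w → A u v := by
    intro u v w h h'
    rcases h' with h' | h'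
    · exact Or.inl (h.trans h')
    · exact Or.inr (h.trans h')
  have no1 : ∀ j < k, ¬ A (c (j+1)) (c j) := by
    intro j hj
    have hne : c j ≠ c (j+1) := fun hh => by
      have := hinj _ _ hj.le hj hh
      omega
    rintro (h | h)
    · exact av_no H _ _ _ hne (hv j hj.le) (fun p hp => (hseg j hj).2 p (Or.inl hp)) h
    · exact av_no H _ _ _ hne (hv j hj.le) (fun p hp => (hseg j hj).2 p (Or.inr hp)) h
  have yes : ∀ j < k, A (c j) (c (j+1)) := by
    intro j hj
    obtain ⟨l, hl, _⟩ := r1 j hj.le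
    refine Or.inl (suffix_av H l _ _ _ hl ((hseg j hj).2 l (Or.inl hl)) ?_)
    intro hh
    have := hinj _ _ hj hj.le hh
    omega
  have no : ∀ j i, i < j → j ≤ k → ¬ A (c j) (c i) := by
    intro j
    induction j with
    | zero => intro i hi; omega
    | succ j ih =>
      intro i hi hj hA
      rcases Nat.lt_succ_iff_lt_or_eq.1 hi with hij | rfl
      · rcases Asplit _ _ (c j) hA with h | h
        · exact ih i hij (by omega) h
        · exact no1 j hj h
      · exact no1 i hj hA
  -- vertices on a segment
  have E : ∀ j ≤ k, ∀ l e z, H.PathFrom l (c j) e → (j < k ∧ e = c (j+1) ∨ e = t1 ∨ e = t2) →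
      z ∈ l → z ≠ c j → A (c j) z := by
    intro j hj l e z hl he hz hzc
    have := suffix_av H l _ _ z hl hz hzc
    rcases he with ⟨hjk, rfl⟩ | rfl | rfl
    · exact Atr _ _ _ this (yes j hjk)
    · exact Or.inl this
    · exact Or.inr this
  have cross : ∀ i j, i < j → j ≤ k → ∀ l l' e z, H.PathFrom l (c i) (c (i+1)) →
      H.PathFrom l' (c j) e → (j < k ∧ e = c (j+1) ∨ e = t1 ∨ e = t2) →
      z ∈ l → z ∈ l' → (∀ m ≤ k, z ≠ c m) → False := by
    intro i j hij hj l l' e z hl hl' he hz hz' hzc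
    have h1 := E j hj l' e z hl' he hz' (hzc j hj)
    have h2 : A (c (i+1)) z := by
      rcases Nat.lt_or_ge (i+1) j with h | h
      · rcases Asplit _ _ (c (i+1)) h1 with h' | h'
        · exact h'
        · exact absurd h' (no j (i+1) h hj)
      · have : j = i+1 := by omega
        subst this; exact h1
    exact no1 i (by omega) (Atr _ _ _ (prefix_av H l _ _ z hl hz (hzc (i+1) (by omega))) h2)
  have ee1 : ∀ j ≤ k, (j < k ∧ e1 j = c (j+1) ∨ e1 j = t1 ∨ e1 j = t2) := by
    intro j hj
    rcases Nat.lt_or_eq_of_le hj with h | rfl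
    · exact Or.inl ⟨h, he1 j h⟩
    · exact Or.inr (Or.inl he1k)
  have ee2 : ∀ j ≤ k, (j < k ∧ e2 j = c (j+1) ∨ e2 j = t1 ∨ e2 j = t2) := by
    intro j hj
    rcases Nat.lt_or_eq_of_le hj with h | rfl
    · exact Or.inl ⟨h, he2 j h⟩
    · exact Or.inr (Or.inr he2k)
  obtain ⟨Q1, hQ1, hm1⟩ := r1 0 (Nat.zero_le _)
  obtain ⟨Q2, hQ2, hm2⟩ := r2 0 (Nat.zero_le _)
  rw [h0] at hQ1 hQ2
  refine ⟨Q1, Q2, hQ1, hQ2, fun z hz1 hz2 => ?_⟩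
  by_contra hcon
  have hzc : ∀ m ≤ k, z ≠ c m := fun m hm hh => hcon ⟨m, hm, hh⟩
  obtain ⟨i, hi, hzi⟩ := hm1 z hz1
  obtain ⟨j, hj, hzj⟩ := hm2 z hz2
  have hp1 := (hPP i hi).1
  have hp2 := (hPP j hj).2.1
  rcases lt_trichotomy i j with hij | rfl | hij
  · rw [he1 i (by omega)] at hp1
    exact cross i j hij hj _ _ _ z hp1 hp2 (ee2 j hj) hzi hzj hzc
  · have hd := (hPP i hi).2.2
    have a1 : z = e1 i := by
      by_contra hne
      exact hd z (Or.inl (mem_internal H _ _ _ z hp1 hzi (hzc i hi) hne)) ⟨hzi, hzj⟩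
    have a2 : z = e2 i := by
      by_contra hne
      exact hd z (Or.inr (mem_internal H _ _ _ z hp2 hzj (hzc i hi) hne)) ⟨hzi, hzj⟩
    rcases Nat.lt_or_eq_of_le hi with h | rfl
    · rw [he1 i h] at a1
      exact hzc _ h a1
    · rw [he1k] at a1
      rw [he2k] at a2
      exact ht (a1.symm.trans a2)
  · rw [he2 j (by omega)] at hp2
    exact cross j i hij hi _ _ _ z hp2 hp1 (ee1 i hi) hzj hzi hzc

theorem path_delete (G : Dgraph V) (D : Set V) (l : List V) (a b : V)
    (h : (G.delete D).PathFrom l a b) : G.PathFrom l a b ∧ ∀ z ∈ l, z ∉ D := by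
  obtain ⟨⟨h0, hn, hc, hv⟩, h1, h2⟩ := h
  refine ⟨⟨⟨h0, hn, ?_, fun v hv' => (hv v hv').1⟩, h1, h2⟩, fun z hz => (hv z hz).2⟩
  exact List.IsChain.imp (fun x y hxy => hxy.1) hc

end CutAux

/-- Suppose `cs 0, …, cs p` is a sequence of cut vertices (with
pairwise distinct entries) between `x1` and `y1, y2` in `G − {ds 0, …, ds q}`,
and simultaneously `ds 0, …, ds q` is a sequence of cut vertices (with pairwise
distinct entries) between `x2` and `y3, y4` in `G − {cs 0, …, cs p}`.  Then
there is a half-integral routing: paths `Q1 : x1 → y1`, `Q2 : x1 → y2`,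
`Q3 : x2 → y3`, `Q4 : x2 → y4` in `G` with every vertex on at most two of the
four paths. -/
theorem stmt8 {V : Type*} [DecidableEq V] (G : Dgraph V) (x1 x2 y1 y2 y3 y4 : V)
    (hx11 : x1 ≠ y1) (hx12 : x1 ≠ y2) (hx23 : x2 ≠ y3) (hx24 : x2 ≠ y4)
    (hy12 : y1 ≠ y2) (hy34 : y3 ≠ y4)
    (p q : ℕ) (cs ds : ℕ → V)
    (hcinj : ∀ i j, i ≤ p → j ≤ p → cs i = cs j → i = j)
    (hdinj : ∀ i j, i ≤ q → j ≤ q → ds i = ds j → i = j)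
    (hc : (G.delete {v | ∃ j ≤ q, v = ds j}).IsCutSeq x1 y1 y2 p cs)
    (hd : (G.delete {v | ∃ i ≤ p, v = cs i}).IsCutSeq x2 y3 y4 q ds) :
    ∃ Q1 Q2 Q3 Q4 : List V,
      G.PathFrom Q1 x1 y1 ∧ G.PathFrom Q2 x1 y2 ∧
      G.PathFrom Q3 x2 y3 ∧ G.PathFrom Q4 x2 y4 ∧
      ∀ z : V,
        (if z ∈ Q1 then 1 else 0) + (if z ∈ Q2 then 1 else 0) +
        (if z ∈ Q3 then 1 else 0) + (if z ∈ Q4 then 1 else 0) ≤ 2 := by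
  obtain ⟨Q1, Q2, h1, h2, h12⟩ := CutAux.main _ _ _ _ _ _ hy12 hcinj hc
  obtain ⟨Q3, Q4, h3, h4, h34⟩ := CutAux.main _ _ _ _ _ _ hy34 hdinj hd
  obtain ⟨h1, n1⟩ := CutAux.path_delete _ _ _ _ _ h1
  obtain ⟨h2, n2⟩ := CutAux.path_delete _ _ _ _ _ h2
  obtain ⟨h3, n3⟩ := CutAux.path_delete _ _ _ _ _ h3
  obtain ⟨h4, n4⟩ := CutAux.path_delete _ _ _ _ _ h4
  refine ⟨Q1, Q2, Q3, Q4, h1, h2, h3, h4, fun z => ?_⟩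
  have a12 := h12 z
  have a34 := h34 z
  have b1 := n1 z
  have b2 := n2 z
  have b3 := n3 z
  have b4 := n4 z
  simp only [Set.mem_setOf_eq] at b1 b2 b3 b4
  by_cases z1 : z ∈ Q1 <;> by_cases z2 : z ∈ Q2 <;> by_cases z3 : z ∈ Q3 <;>
    by_cases z4 : z ∈ Q4 <;> simp only [z1, z2, z3, z4, if_true, if_false] <;>
    first
    | omega
    | exact absurd (a12 z1 z2) (b3 z3)
    | exact absurd (a12 z1 z2) (b4 z4)
    | exact absurd (a34 z3 z4) (b1 z1)
    | exact absurd (a34 z3 z4) (b2 z2)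
end

section
/- Let G be a digraph and T ⊆ V(G). Suppose G has no directed separation (C,D) of order at most 1 with T ⊆ C and D \ C ≠ ∅. For i = 1, 2 let (A_i, B_i) be a directed separation of G of order at most 2 such that G has no edge with tail in B_i \ A_i and head in A_i \ B_i, with T ⊆ A_1 ∩ A_2. If (B_1 \ A_1) ∩ (B_2 \ A_2) ≠ ∅, then (A_1 ∩ A_2, B_1 ∪ B_2) is a directed separation of G of order at most 2, G has no edge with tail in (B_1 ∪ B_2) \ (A_1 ∩ A_2) and head in (A_1 ∩ A_2) \ (B_1 ∪ B_2), and T ⊆ A_1 ∩ A_2. -/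
/-- Suppose `G` has no directed separation `(C, D)` of order at
most `1` with `T ⊆ C` and `D \ C ≠ ∅`.  For `i = 1, 2` let `(Aᵢ, Bᵢ)` be a
directed separation of order at most `2` with no cross edge from `Bᵢ \ Aᵢ` to
`Aᵢ \ Bᵢ` and `T ⊆ A₁ ∩ A₂`.  If `(B₁ \ A₁) ∩ (B₂ \ A₂) ≠ ∅`, then
`(A₁ ∩ A₂, B₁ ∪ B₂)` is a directed separation of order at most `2` with no cross
edge from `(B₁ ∪ B₂) \ (A₁ ∩ A₂)` to `(A₁ ∩ A₂) \ (B₁ ∪ B₂)`, and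
`T ⊆ A₁ ∩ A₂`. -/
theorem stmt9 {V : Type*} (G : Dgraph V) (T : Set V)
    (hNoOrd1 : ¬ ∃ C D : Set V, C ∪ D = G.verts ∧
      ((∀ x y, G.Edge x y → x ∈ C \ D → y ∉ D \ C) ∨
       (∀ x y, G.Edge x y → x ∈ D \ C → y ∉ C \ D)) ∧
      (C ∩ D).ncard ≤ 1 ∧ T ⊆ C ∧ (D \ C).Nonempty)
    (A₁ B₁ A₂ B₂ : Set V)
    (hU₁ : A₁ ∪ B₁ = G.verts) (hU₂ : A₂ ∪ B₂ = G.verts)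
    (hord₁ : (A₁ ∩ B₁).ncard ≤ 2) (hord₂ : (A₂ ∩ B₂).ncard ≤ 2)
    (hE₁ : ∀ x y, G.Edge x y → x ∈ B₁ \ A₁ → y ∉ A₁ \ B₁)
    (hE₂ : ∀ x y, G.Edge x y → x ∈ B₂ \ A₂ → y ∉ A₂ \ B₂)
    (hT : T ⊆ A₁ ∩ A₂)
    (hmeet : ((B₁ \ A₁) ∩ (B₂ \ A₂)).Nonempty) :
    (A₁ ∩ A₂) ∪ (B₁ ∪ B₂) = G.verts ∧
    ((A₁ ∩ A₂) ∩ (B₁ ∪ B₂)).ncard ≤ 2 ∧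
    (∀ x y, G.Edge x y → x ∈ (B₁ ∪ B₂) \ (A₁ ∩ A₂) → y ∉ (A₁ ∩ A₂) \ (B₁ ∪ B₂)) ∧
    T ⊆ A₁ ∩ A₂ := by
  have hf₁ : (A₁ ∩ B₁).Finite := G.finite.subset (fun v hv => hU₁ ▸ Or.inl hv.1)
  have hf₂ : (A₂ ∩ B₂).Finite := G.finite.subset (fun v hv => hU₂ ▸ Or.inl hv.1)
  have m₁ : ∀ v, v ∈ G.verts ↔ v ∈ A₁ ∨ v ∈ B₁ := fun v => by rw [← hU₁]; rfl
  have m₂ : ∀ v, v ∈ G.verts ↔ v ∈ A₂ ∨ v ∈ B₂ := fun v => by rw [← hU₂]; rfl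
  have hXP : (A₁ ∩ A₂) ∩ (B₁ ∪ B₂) ⊆ (A₁ ∩ B₁) ∪ (A₂ ∩ B₂) := by
    rintro v ⟨⟨h1, h2⟩, h | h⟩
    · exact Or.inl ⟨h1, h⟩
    · exact Or.inr ⟨h2, h⟩
  have hYP : (A₁ ∪ A₂) ∩ (B₁ ∩ B₂) ⊆ (A₁ ∩ B₁) ∪ (A₂ ∩ B₂) := by
    rintro v ⟨h | h, h1, h2⟩
    · exact Or.inl ⟨h, h1⟩
    · exact Or.inr ⟨h, h2⟩
  have hfX := (hf₁.union hf₂).subset hXP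
  have hfY := (hf₁.union hf₂).subset hYP
  have e1 := Set.ncard_union_add_ncard_inter _ _ hfX hfY
  have e2 := Set.ncard_union_add_ncard_inter _ _ hf₁ hf₂
  have i1 := Set.ncard_le_ncard (Set.union_subset hXP hYP) (hf₁.union hf₂)
  have i2 : (((A₁ ∩ A₂) ∩ (B₁ ∪ B₂)) ∩ ((A₁ ∪ A₂) ∩ (B₁ ∩ B₂))).ncard ≤
      ((A₁ ∩ B₁) ∩ (A₂ ∩ B₂)).ncard :=
    Set.ncard_le_ncard
      (fun v hv => ⟨⟨hv.1.1.1, hv.2.2.1⟩, ⟨hv.1.1.2, hv.2.2.2⟩⟩) (hf₁.inter_of_left _)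
  have hY : 2 ≤ ((A₁ ∪ A₂) ∩ (B₁ ∩ B₂)).ncard := by
    by_contra hlt
    refine hNoOrd1 ⟨A₁ ∪ A₂, B₁ ∩ B₂, ?_, Or.inr ?_, by omega,
      fun v hv => Or.inl (hT hv).1, ?_⟩
    · ext v
      have := m₁ v
      have := m₂ v
      simp only [Set.mem_union, Set.mem_inter_iff]
      tauto
    · intro x y hxy hx hy
      have := hE₁ x y hxy
      have := hE₂ x y hxy
      have hv := (G.mem_of_edge hxy).2
      have := (m₁ y).1 hv
      have := (m₂ y).1 hv
      simp only [Set.mem_union, Set.mem_inter_iff, Set.mem_diff] at *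
      tauto
    · obtain ⟨v, h1, h2⟩ := hmeet
      exact ⟨v, ⟨h1.1, h2.1⟩, fun h => h.elim h1.2 h2.2⟩
  refine ⟨?_, by omega, ?_, hT⟩
  · ext v
    have := m₁ v
    have := m₂ v
    simp only [Set.mem_union, Set.mem_inter_iff]
    tauto
  · intro x y hxy hx hy
    have hv := (G.mem_of_edge hxy).1
    by_cases h1 : x ∈ A₁
    · have h2 : x ∉ A₂ := fun h2 => hx.2 ⟨h1, h2⟩
      exact hE₂ x y hxy ⟨((m₂ x).1 hv).resolve_left h2, h2⟩ ⟨hy.1.2, fun h => hy.2 (Or.inr h)⟩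
    · exact hE₁ x y hxy ⟨((m₁ x).1 hv).resolve_left h1, h1⟩ ⟨hy.1.1, fun h => hy.2 (Or.inl h)⟩
end

section
/- Let G be a digraph, let k ≥ 1, and let (A,B) be a directed separation of G of order less than k. Let C_1, …, C_k be pairwise vertex-disjoint directed cycles in G such that for every ordered pair of indices i ≠ j there exist k pairwise vertex-disjoint directed paths in G, each starting at a vertex of C_i and ending at a vertex of C_j. Then: (1) there is an index i with V(C_i) ∩ (A ∩ B) = ∅; (2) every cycle C_i with V(C_i) ∩ (A ∩ B) = ∅ satisfies V(C_i) ⊆ A \ B or V(C_i) ⊆ B \ A; and (3) there do not exist indices i and j with V(C_i) ⊆ A \ B and V(C_j) ⊆ B \ A. In particular, exactly one of the two sides A, B contains some cycle C_i entirely within A \ B respectively B \ A. -/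
/-- A directed cycle: pairwise distinct vertices `v₁, …, vₘ` with consecutive
edges and an edge from `vₘ` back to `v₁`. -/
def Dgraph.IsCycle {V : Type*} (G : Dgraph V) (p : List V) : Prop :=
  p ≠ [] ∧ p.Nodup ∧ p.Chain' G.Edge ∧ (∀ v ∈ p, v ∈ G.verts) ∧
  ∃ a b, p.head? = some a ∧ p.getLast? = some b ∧ G.Edge b a


theorem aux_pigeon {V : Type*} (k : ℕ) (S : Set V) (hf : S.Finite) (hS : S.ncard < k)
    (L : Fin k → List V) (hd : ∀ i j, i ≠ j → ∀ v, v ∈ L i → v ∉ L j) :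
    ∃ i, ∀ v ∈ L i, v ∉ S := by
  by_contra hcon
  push Not at hcon
  choose f hf1 hf2 using hcon
  have hinj : Function.Injective f := by
    intro a b hab
    by_contra hne
    exact hd a b hne _ (hf1 a) (hab ▸ hf1 b)
  have h1 : (Set.range f).ncard ≤ S.ncard :=
    Set.ncard_le_ncard (by rintro _ ⟨a, rfl⟩; exact hf2 a) hf
  rw [← Set.image_univ, Set.ncard_image_of_injective _ hinj, Set.ncard_univ] at h1
  simp at h1
  omega

theorem aux_head {V : Type*} (R : V → V → Prop) (X Y : Set V)
    (hR : ∀ x y, R x y → x ∈ X → y ∉ Y) (l : List V) :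
    l.IsChain R → (∀ v ∈ l, v ∈ X ∨ v ∈ Y) → ∀ a, l.head? = some a → a ∈ X →
    ∀ v ∈ l, v ∈ X := by
  induction l with
  | nil => simp
  | cons b t ih =>
    intro hc hv a ha haX v hvm
    simp only [List.head?_cons, Option.some.injEq] at ha
    subst ha
    rcases List.mem_cons.1 hvm with rfl | hvt
    · exact haX
    · cases t with
      | nil => simp at hvt
      | cons c t =>
        rw [List.isChain_cons_cons] at hc
        refine ih hc.2 (fun v h => hv v (List.mem_cons_of_mem _ h)) c rfl ?_ v hvt
        exact (hv c (by simp)).resolve_right (hR _ _ hc.1 haX)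

theorem aux_last {V : Type*} (R : V → V → Prop) (X Y : Set V)
    (hR : ∀ x y, R x y → x ∈ X → y ∉ Y) (l : List V) (hc : l.IsChain R)
    (hv : ∀ v ∈ l, v ∈ X ∨ v ∈ Y) (b : V) (hb : l.getLast? = some b)
    (v : V) (hvl : v ∈ l) (hvX : v ∈ X) : b ∈ X := by
  obtain ⟨s, t, rfl⟩ := List.append_of_mem hvl
  have h2 : (v :: t).IsChain R := hc.right_of_append
  refine aux_head R X Y hR (v :: t) h2 (fun w hw => hv w (by simp at hw ⊢; tauto)) v rfl hvX b ?_
  rw [List.getLast?_append_of_ne_nil _ (by simp)] at hb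
  exact List.mem_of_getLast? hb

theorem aux_main {V : Type*} (G : Dgraph V) (k : ℕ)
    (A B : Set V) (hU : A ∪ B = G.verts)
    (hSep : ∀ x y, G.Edge x y → x ∈ A \ B → y ∉ B \ A)
    (hord : (A ∩ B).ncard < k)
    (C : Fin k → List V)
    (hC : ∀ i, G.IsCycle (C i))
    (hlink : ∀ i j, i ≠ j → ∃ P : Fin k → List V,
      (∀ a, ∃ x y, G.PathFrom (P a) x y ∧ x ∈ C i ∧ y ∈ C j) ∧
      (∀ a b, a ≠ b → ∀ v, v ∈ P a → v ∉ P b)) :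
    (∀ i, (∀ v ∈ C i, v ∉ A ∩ B) →
      (∀ v ∈ C i, v ∈ A \ B) ∨ (∀ v ∈ C i, v ∈ B \ A)) ∧
    (¬ ∃ i j, (∀ v ∈ C i, v ∈ A \ B) ∧ (∀ v ∈ C j, v ∈ B \ A)) := by
  have hside : ∀ v, v ∈ G.verts → v ∉ A ∩ B → v ∈ A \ B ∨ v ∈ B \ A := by
    intro v hv hn
    rw [← hU] at hv
    simp only [Set.mem_union, Set.mem_inter_iff, Set.mem_diff] at *
    tauto
  constructor
  · intro i hi
    obtain ⟨hne, hnd, hch, hvt, a, b, ha, hb, hab⟩ := hC i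
    have hs : ∀ v ∈ C i, v ∈ A \ B ∨ v ∈ B \ A := fun v hv => hside v (hvt v hv) (hi v hv)
    by_cases hex : ∃ v ∈ C i, v ∈ A \ B
    · obtain ⟨v, hv, hvA⟩ := hex
      left
      have hbA := aux_last G.Edge _ _ hSep (C i) hch hs b hb v hv hvA
      have haA := (hs a (List.mem_of_head? ha)).resolve_right (hSep _ _ hab hbA)
      exact aux_head G.Edge _ _ hSep (C i) hch hs a ha haA
    · right
      intro v hv
      exact (hs v hv).resolve_left (fun h => hex ⟨v, hv, h⟩)
  · rintro ⟨i, j, hi, hj⟩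
    have hij : i ≠ j := by
      rintro rfl
      obtain ⟨hne, -⟩ := hC i
      obtain ⟨v, hv⟩ := List.exists_mem_of_ne_nil _ hne
      exact (hi v hv).2 (hj v hv).1
    obtain ⟨P, hP, hPd⟩ := hlink i j hij
    have hfin : (A ∩ B).Finite :=
      G.finite.subset (fun v hv => hU ▸ Or.inl hv.1)
    obtain ⟨a, ha⟩ := aux_pigeon k _ hfin hord P hPd
    obtain ⟨x, y, ⟨⟨-, -, hch, hvt⟩, hx, hy⟩, hxi, hyj⟩ := hP a
    have := aux_head G.Edge _ _ hSep (P a) hch (fun v hv => hside v (hvt v hv) (ha v hv)) x hx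
      (hi x hxi) y (List.mem_of_getLast? hy)
    exact this.2 (hj y hyj).1

/-- Let `(A, B)` be a directed separation of order `< k` and
let `C 1, …, C k` be pairwise vertex-disjoint directed cycles such that for each
ordered pair `i ≠ j` there are `k` pairwise vertex-disjoint directed paths from
`C i` to `C j`.  Then some cycle avoids `A ∩ B`; every cycle avoiding `A ∩ B`
lies entirely in `A \ B` or entirely in `B \ A`; no two cycles lie in `A \ B`
and in `B \ A` respectively; and hence exactly one of the two sides contains a
cycle entirely. -/
theorem stmt10 {V : Type*} (G : Dgraph V) (k : ℕ) (hk : 1 ≤ k)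
    (A B : Set V) (hU : A ∪ B = G.verts)
    (hSep : (∀ x y, G.Edge x y → x ∈ A \ B → y ∉ B \ A) ∨
            (∀ x y, G.Edge x y → x ∈ B \ A → y ∉ A \ B))
    (hord : (A ∩ B).ncard < k)
    (C : Fin k → List V)
    (hC : ∀ i, G.IsCycle (C i))
    (hCdisj : ∀ i j, i ≠ j → ∀ v, v ∈ C i → v ∉ C j)
    (hlink : ∀ i j, i ≠ j → ∃ P : Fin k → List V,
      (∀ a, ∃ x y, G.PathFrom (P a) x y ∧ x ∈ C i ∧ y ∈ C j) ∧
      (∀ a b, a ≠ b → ∀ v, v ∈ P a → v ∉ P b)) :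
    (∃ i, ∀ v ∈ C i, v ∉ A ∩ B) ∧
    (∀ i, (∀ v ∈ C i, v ∉ A ∩ B) →
      (∀ v ∈ C i, v ∈ A \ B) ∨ (∀ v ∈ C i, v ∈ B \ A)) ∧
    (¬ ∃ i j, (∀ v ∈ C i, v ∈ A \ B) ∧ (∀ v ∈ C j, v ∈ B \ A)) ∧
    Xor' (∃ i, ∀ v ∈ C i, v ∈ A \ B) (∃ i, ∀ v ∈ C i, v ∈ B \ A) := by
  have hfin : (A ∩ B).Finite :=
    G.finite.subset (fun v hv => hU ▸ Or.inl hv.1)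
  have h1 := aux_pigeon k _ hfin hord C hCdisj
  have h23 : (∀ i, (∀ v ∈ C i, v ∉ A ∩ B) →
      (∀ v ∈ C i, v ∈ A \ B) ∨ (∀ v ∈ C i, v ∈ B \ A)) ∧
    (¬ ∃ i j, (∀ v ∈ C i, v ∈ A \ B) ∧ (∀ v ∈ C j, v ∈ B \ A)) := by
    rcases hSep with h | h
    · exact aux_main G k A B hU h hord C hC hlink
    · obtain ⟨h2, h3⟩ := aux_main G k B A (by rw [Set.union_comm]; exact hU) h
        (by rw [Set.inter_comm]; exact hord) C hC hlink
      refine ⟨fun i hi => (h2 i (by rw [Set.inter_comm]; exact hi)).symm, ?_⟩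
      rintro ⟨i, j, hi, hj⟩
      exact h3 ⟨j, i, hj, hi⟩
  obtain ⟨h2, h3⟩ := h23
  refine ⟨h1, h2, h3, ?_⟩
  obtain ⟨i, hi⟩ := h1
  rcases h2 i hi with h | h
  · exact Or.inl ⟨⟨i, h⟩, fun ⟨j, hj⟩ => h3 ⟨i, j, h, hj⟩⟩
  · exact Or.inr ⟨⟨i, h⟩, fun ⟨j, hj⟩ => h3 ⟨j, i, hj, h⟩⟩
end

section
/- Let c ≥ 2 and let G be a digraph containing the switch gadget S(c) such that the set of edges of G between two gadget vertices is exactly the edge set of S(c), and every edge of G between a gadget vertex and a non-gadget vertex either has its head in {b, x, d, u, u'} and its tail outside the gadget, or has its tail in {a, e, y, v, v'} and its head outside the gadget. Let 𝒫 be a family of 3c−1 pairwise distinct directed paths in G such that every vertex of G lies on at most c paths of 𝒫, no path of 𝒫 has its first or last vertex in the gadget, exactly c paths of 𝒫 contain the vertex a (the red paths), exactly c other paths of 𝒫 contain an edge of G whose head is b (entering at b), and the remaining c−1 paths of 𝒫 each contain an edge of G whose head is x (entering at x); the 2c−1 paths entering at b or at x are the blue paths. Then: (1) every red path contains the vertex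 d and contains an edge of G whose head is d and whose tail is outside the gadget; (2) exactly c−1 of the blue paths contain an edge of G whose tail is y and whose head is outside the gadget, and exactly c of the blue paths contain an edge of G whose tail is e and whose head is outside the gadget; (3) the vertex x lies on exactly c of the paths of 𝒫, and the vertex y lies on exactly c of the paths of 𝒫; and (4) either both g and h lie on exactly c of the paths of 𝒫 each, or both g' and h' lie on exactly c of the paths of 𝒫 each. -/
/-- Labels for the vertices of the switch gadget `S(c)`: seventeen named
vertices together with the indexed families `p i, q i, ℓ i, r i, w i, w' i`
(meaningful for `1 ≤ i ≤ c`). -/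
inductive SL where
  | a | b | d | e | f | f' | x | y | z | g | g' | h | h' | u | u' | v | v'
  | p (i : ℕ) | q (i : ℕ) | l (i : ℕ) | r (i : ℕ) | w (i : ℕ) | w' (i : ℕ)

/-- Validity of a label for the gadget `S(c)`: indexed labels must have index
in `{1, …, c}`. -/
def SL.Valid (c : ℕ) : SL → Prop
  | .p i => 1 ≤ i ∧ i ≤ c
  | .q i => 1 ≤ i ∧ i ≤ c
  | .l i => 1 ≤ i ∧ i ≤ c
  | .r i => 1 ≤ i ∧ i ≤ c
  | .w i => 1 ≤ i ∧ i ≤ c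
  | .w' i => 1 ≤ i ∧ i ≤ c
  | _ => True

/-- The edge set of the switch gadget `S(c)`. -/
def SEdge (c : ℕ) : SL → SL → Prop := fun s t =>
  (s = .b ∧ t = .p 1) ∨
  (∃ i, 1 ≤ i ∧ i + 1 ≤ c ∧ s = .p i ∧ t = .p (i + 1)) ∨
  (s = .p c ∧ t = .x) ∨
  (∃ i, 1 ≤ i ∧ i ≤ c ∧ s = .p i ∧ t = .a) ∨
  (s = .b ∧ t = .q 1) ∨
  (∃ i, 1 ≤ i ∧ i + 1 ≤ c ∧ s = .q i ∧ t = .q (i + 1)) ∨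
  (s = .q c ∧ t = .f') ∨
  (∃ i, 1 ≤ i ∧ i ≤ c ∧ s = .q i ∧ t = .p i) ∨
  (∃ i, 1 ≤ i ∧ i ≤ c ∧ s = .x ∧ t = .r i) ∨
  (∃ i, 1 ≤ i ∧ i + 1 ≤ c ∧ s = .r (i + 1) ∧ t = .r i) ∨
  (s = .z ∧ t = .r c) ∨
  (∃ i, 1 ≤ i ∧ i ≤ c ∧ s = .r i ∧ t = .l i) ∨
  (∃ i, 2 ≤ i ∧ i ≤ c ∧ s = .r 1 ∧ t = .q i) ∨
  (∃ i, 1 ≤ i ∧ i + 1 ≤ c ∧ s = .l (i + 1) ∧ t = .l i) ∨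
  (s = .y ∧ t = .l c) ∨
  (∃ i, 1 ≤ i ∧ i ≤ c ∧ s = .l i ∧ t = .f) ∨
  (s = .l 1 ∧ t = .q 1) ∨
  ((s = .f ∨ s = .f') ∧ (t = .w 1 ∨ t = .w' 1)) ∨
  (∃ i, 1 ≤ i ∧ i + 1 ≤ c ∧
    ((s = .w i ∧ t = .w (i + 1)) ∨ (s = .w' i ∧ t = .w' (i + 1)))) ∨
  (∃ i, 1 ≤ i ∧ i + 1 ≤ c ∧ (s = .w i ∨ s = .w' i) ∧ t = .z) ∨
  ((s = .w c ∨ s = .w' c) ∧ t = .y) ∨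
  (s = .w c ∧ t = .g) ∨
  (s = .w' c ∧ t = .g') ∨
  (∃ i, 1 ≤ i ∧ i ≤ c ∧ ((s = .g ∧ t = .w i) ∨ (s = .g' ∧ t = .w' i))) ∨
  (s = .v ∧ t = .g) ∨ (s = .v' ∧ t = .g') ∨
  (s = .h ∧ t = .v) ∨ (s = .h' ∧ t = .v') ∨
  (s = .u ∧ t = .h) ∨ (s = .u' ∧ t = .h') ∨
  (s = .d ∧ t = .h) ∨ (s = .d ∧ t = .h') ∨
  (s = .g ∧ t = .u') ∨ (s = .g' ∧ t = .u) ∨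
  (s = .u ∧ t = .e) ∨ (s = .u' ∧ t = .e)

namespace SwitchAux
open Finset Classical

theorem tight {I L : Type} [Fintype I] (S : Finset L) (T : I → L → Prop) (c : ℕ)
    (cap : ∀ s ∈ S, #{i | T i s} ≤ c) (g : I → ℕ)
    (hg : ∀ i, g i ≤ #{s ∈ S | T i s}) (hsum : #S * c ≤ ∑ i, g i) :
    (∀ i, #{s ∈ S | T i s} = g i) ∧ ∀ s ∈ S, #{i | T i s} = c := by
  have key : ∑ i, #{s ∈ S | T i s} = ∑ s ∈ S, #{i | T i s} :=
    Finset.sum_card_bipartiteAbove_eq_sum_card_bipartiteBelow T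
  have h1 : ∑ i, g i ≤ ∑ i, #{s ∈ S | T i s} := Finset.sum_le_sum fun i _ => hg i
  have h2 : ∑ s ∈ S, #{i | T i s} ≤ ∑ s ∈ S, c := Finset.sum_le_sum cap
  have h3 : ∑ s ∈ S, c = #S * c := by simp
  constructor
  · intro i
    have := (Finset.sum_eq_sum_iff_of_le (s := univ) (fun i _ => hg i)).1 (by omega) i (mem_univ i)
    exact this.symm
  · exact (Finset.sum_eq_sum_iff_of_le cap).1 (by omega)

theorem tightAB {I : Type} [Fintype I] (c : ℕ) (hc : 1 ≤ c) (A B : Finset I)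
    (hAB : Disjoint A B) (T : I → ℕ → Prop)
    (cap : ∀ j, 1 ≤ j → j ≤ c → #{i | T i j} ≤ c)
    (hA : ∀ i ∈ A, ∀ j, 1 ≤ j → j ≤ c → T i j) (hcA : c - 1 ≤ #A)
    (hB : ∀ i ∈ B, ∃ j, 1 ≤ j ∧ j ≤ c ∧ T i j) (hcB : #B = c) :
    #A = c - 1 ∧
    (∀ i ∈ B, ∀ j k, 1 ≤ j → j ≤ c → 1 ≤ k → k ≤ c → T i j → T i k → j = k) ∧
    (∀ i, i ∉ A → i ∉ B → ∀ j, 1 ≤ j → j ≤ c → ¬ T i j) ∧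
    (∀ j, 1 ≤ j → j ≤ c → ∃ i ∈ B, T i j ∧ ∀ i' ∈ B, T i' j → i' = i) := by
  have hsum : ∑ i, ((if i ∈ A then c else 0) + (if i ∈ B then 1 else 0)) = #A * c + #B := by
    rw [Finset.sum_add_distrib, Finset.sum_ite_mem, Finset.sum_ite_mem]; simp
  have hle : c * c ≤ #A * c + #B := by
    rw [hcB]
    calc c * c = (c - 1) * c + c := by
          obtain ⟨k, rfl⟩ : ∃ k, c = k + 1 := ⟨c - 1, by omega⟩
          simp; ring
      _ ≤ _ := by gcongr
  have ht := tight (Icc 1 c) T c (fun s hs => cap s (mem_Icc.1 hs).1 (mem_Icc.1 hs).2)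
    (fun i => (if i ∈ A then c else 0) + (if i ∈ B then 1 else 0)) (by
      intro i
      by_cases hiA : i ∈ A
      · have hiB : i ∉ B := Finset.disjoint_left.1 hAB hiA
        simp only [hiA, hiB, if_true, if_false, add_zero]
        rw [Finset.filter_true_of_mem]
        · simp
        · intro j hj; exact hA i hiA j (mem_Icc.1 hj).1 (mem_Icc.1 hj).2
      · by_cases hiB : i ∈ B
        · simp only [hiA, hiB, if_true, if_false, zero_add]
          obtain ⟨j, h1, h2, h3⟩ := hB i hiB
          exact Finset.card_pos.2 ⟨j, by simp [h1, h2, h3]⟩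
        · simp [hiA, hiB]) (by rw [hsum]; simpa using hle)
  obtain ⟨t1, t2⟩ := ht
  have hAle : ∀ j, 1 ≤ j → j ≤ c → #A + #{i ∈ B | T i j} = c := by
    intro j h1 h2
    rw [← t2 j (mem_Icc.2 ⟨h1, h2⟩), ← Finset.card_union_of_disjoint]
    · congr 1
      ext i
      simp only [mem_union, mem_filter, mem_univ, true_and]
      constructor
      · rintro (h | h)
        · exact hA i h j h1 h2
        · exact h.2
      · intro h
        by_contra hcon
        push Not at hcon
        have hiB : i ∉ B := fun hb => hcon.2 hb h
        have := t1 i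
        simp only [hcon.1, hiB, if_false, add_zero, Finset.card_eq_zero] at this
        have hm : j ∈ ({s ∈ Icc 1 c | T i s} : Finset ℕ) := by simp [h1, h2, h]
        rw [this] at hm; simp at hm
    · exact hAB.mono_right (Finset.filter_subset _ _)
  have hAcard : #A = c - 1 := by
    by_contra hne
    have : c ≤ #A := by omega
    have hBe : ∀ j, 1 ≤ j → j ≤ c → #{i ∈ B | T i j} = 0 := fun j h1 h2 => by
      have := hAle j h1 h2; omega
    have hBne : B.Nonempty := Finset.card_pos.1 (by omega)
    obtain ⟨i, hi⟩ := hBne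
    obtain ⟨j, h1, h2, h3⟩ := hB i hi
    have h0 := hBe j h1 h2
    rw [Finset.card_eq_zero] at h0
    have hm : i ∈ ({i ∈ B | T i j} : Finset I) := by simp [hi, h3]
    rw [h0] at hm; simp at hm
  refine ⟨hAcard, ?_, ?_, ?_⟩
  · intro i hi j k h1 h2 h3 h4 hj hk
    have hiA : i ∉ A := Finset.disjoint_right.1 hAB hi
    have := t1 i
    simp only [hiA, hi, if_true, if_false, zero_add] at this
    exact Finset.card_le_one.1 this.le j (by simp [*]) k (by simp [*])
  · intro i hiA hiB j h1 h2 h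
    have := t1 i
    simp only [hiA, hiB, if_false, add_zero, Finset.card_eq_zero] at this
    have hm : j ∈ ({s ∈ Icc 1 c | T i s} : Finset ℕ) := by simp [h1, h2, h]
    rw [this] at hm; simp at hm
  · intro j h1 h2
    have h := hAle j h1 h2
    obtain ⟨i, hi⟩ := Finset.card_eq_one.1 (show #{i ∈ B | T i j} = 1 by omega)
    refine ⟨i, ?_⟩
    have hm : i ∈ ({i ∈ B | T i j} : Finset I) := by rw [hi]; simp
    refine ⟨(mem_filter.1 hm).1, (mem_filter.1 hm).2, ?_⟩
    intro i' hi' hT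
    have hm' : i' ∈ ({i ∈ B | T i j} : Finset I) := by simp [hi', hT]
    rw [hi] at hm'; simpa using hm'

/-- Abstract system of label traces of the paths. -/
structure Sys (c : ℕ) {I : Type} [Fintype I] (M : I → SL → Prop) (Nx : I → SL → SL → Prop)
    (Out Inn : I → SL → Prop) (R Bb Bx : Finset I) : Prop where
  hc : 2 ≤ c
  valid : ∀ i s, M i s → SL.Valid c s
  edge : ∀ i s t, Nx i s t → SEdge c s t
  ml : ∀ i s t, Nx i s t → M i s
  mr : ∀ i s t, Nx i s t → M i t
  su : ∀ i s t t', Nx i s t → Nx i s t' → t = t'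
  pu : ∀ i s s' t, Nx i s t → Nx i s' t → s = s'
  succ : ∀ i s, M i s → (∃ t, Nx i s t) ∨
    (Out i s ∧ (s = .a ∨ s = .e ∨ s = .y ∨ s = .v ∨ s = .v'))
  pred : ∀ i s, M i s → (∃ t, Nx i t s) ∨
    (Inn i s ∧ (s = .b ∨ s = .x ∨ s = .d ∨ s = .u ∨ s = .u'))
  out_m : ∀ i s, SL.Valid c s → Out i s → M i s
  cap : ∀ s, SL.Valid c s → #{i | M i s} ≤ c
  red : ∀ i, i ∈ R ↔ M i .a
  cR : #R = c
  cBb : #Bb = c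
  cBx : #Bx = c - 1
  dRb : Disjoint R Bb
  dRx : Disjoint R Bx
  dbx : Disjoint Bb Bx
  cover : ∀ i, i ∈ R ∨ i ∈ Bb ∨ i ∈ Bx
  mb : ∀ i ∈ Bb, M i .b
  mx : ∀ i ∈ Bx, M i .x

namespace Sys
variable {c : ℕ} {I : Type} [Fintype I] {M : I → SL → Prop} {Nx : I → SL → SL → Prop}
    {Out Inn : I → SL → Prop} {R Bb Bx : Finset I} (S : Sys c M Nx Out Inn R Bb Bx)
include S
set_option linter.all false
theorem succ_b {i : I} (hm : M i (.b)) : Nx i .b (.p 1) ∨ Nx i .b (.q 1) := by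
  have h2 := S.hc
  have hv := S.valid _ _ hm
  rcases S.succ _ _ hm with ⟨t, ht⟩ | ht
  · have he := S.edge _ _ _ ht
    simp [SEdge] at he
    try grind [SL.Valid]
  · simpa using ht

theorem succ_p {i : I} {j : ℕ} (hm : M i (.p j)) : (j < c ∧ Nx i (.p j) (.p (j+1))) ∨ (j = c ∧ Nx i (.p j) .x) ∨ Nx i (.p j) .a := by
  have h2 := S.hc
  have hv := S.valid _ _ hm
  rcases S.succ _ _ hm with ⟨t, ht⟩ | ht
  · have he := S.edge _ _ _ ht
    simp [SEdge] at he
    try grind [SL.Valid]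
  · simpa using ht

theorem pred_p {i : I} {j : ℕ} (hm : M i (.p j)) : (j = 1 ∧ Nx i .b (.p j)) ∨ (∃ k, 1 ≤ k ∧ j = k+1 ∧ Nx i (.p k) (.p j)) ∨ Nx i (.q j) (.p j) := by
  have h2 := S.hc
  have hv := S.valid _ _ hm
  rcases S.pred _ _ hm with ⟨t, ht⟩ | ht
  · have he := S.edge _ _ _ ht
    simp [SEdge] at he
    try grind [SL.Valid]
  · simpa using ht

theorem pred_a {i : I} (hm : M i (.a)) : ∃ j, 1 ≤ j ∧ j ≤ c ∧ Nx i (.p j) .a := by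
  have h2 := S.hc
  have hv := S.valid _ _ hm
  rcases S.pred _ _ hm with ⟨t, ht⟩ | ht
  · have he := S.edge _ _ _ ht
    simp [SEdge] at he
    try grind [SL.Valid]
  · simpa using ht

theorem succ_q {i : I} {j : ℕ} (hm : M i (.q j)) : (j < c ∧ Nx i (.q j) (.q (j+1))) ∨ (j = c ∧ Nx i (.q j) .f') ∨ Nx i (.q j) (.p j) := by
  have h2 := S.hc
  have hv := S.valid _ _ hm
  rcases S.succ _ _ hm with ⟨t, ht⟩ | ht
  · have he := S.edge _ _ _ ht
    simp [SEdge] at he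
    try grind [SL.Valid]
  · simpa using ht

theorem pred_q {i : I} {j : ℕ} (hm : M i (.q j)) : (j = 1 ∧ Nx i .b (.q j)) ∨ (∃ k, 1 ≤ k ∧ j = k+1 ∧ Nx i (.q k) (.q j)) ∨ (2 ≤ j ∧ Nx i (.r 1) (.q j)) ∨ (j = 1 ∧ Nx i (.l 1) (.q j)) := by
  have h2 := S.hc
  have hv := S.valid _ _ hm
  rcases S.pred _ _ hm with ⟨t, ht⟩ | ht
  · have he := S.edge _ _ _ ht
    simp [SEdge] at he
    try grind [SL.Valid]
  · simpa using ht

theorem succ_x {i : I} (hm : M i (.x)) : ∃ j, 1 ≤ j ∧ j ≤ c ∧ Nx i .x (.r j) := by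
  have h2 := S.hc
  have hv := S.valid _ _ hm
  rcases S.succ _ _ hm with ⟨t, ht⟩ | ht
  · have he := S.edge _ _ _ ht
    simp [SEdge] at he
    try grind [SL.Valid]
  · simpa using ht

theorem pred_r {i : I} {j : ℕ} (hm : M i (.r j)) : Nx i .x (.r j) ∨ (j < c ∧ Nx i (.r (j+1)) (.r j)) ∨ (j = c ∧ Nx i .z (.r j)) := by
  have h2 := S.hc
  have hv := S.valid _ _ hm
  rcases S.pred _ _ hm with ⟨t, ht⟩ | ht
  · have he := S.edge _ _ _ ht
    simp [SEdge] at he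
    try grind [SL.Valid]
  · simpa using ht

theorem succ_r {i : I} {j : ℕ} (hm : M i (.r j)) : (∃ k, 1 ≤ k ∧ j = k+1 ∧ Nx i (.r j) (.r k)) ∨ Nx i (.r j) (.l j) ∨ (j = 1 ∧ ∃ k, 2 ≤ k ∧ k ≤ c ∧ Nx i (.r j) (.q k)) := by
  have h2 := S.hc
  have hv := S.valid _ _ hm
  rcases S.succ _ _ hm with ⟨t, ht⟩ | ht
  · have he := S.edge _ _ _ ht
    simp [SEdge] at he
    try grind [SL.Valid]
  · simpa using ht

theorem pred_l {i : I} {j : ℕ} (hm : M i (.l j)) : Nx i (.r j) (.l j) ∨ (j < c ∧ Nx i (.l (j+1)) (.l j)) ∨ (j = c ∧ Nx i .y (.l j)) := by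
  have h2 := S.hc
  have hv := S.valid _ _ hm
  rcases S.pred _ _ hm with ⟨t, ht⟩ | ht
  · have he := S.edge _ _ _ ht
    simp [SEdge] at he
    try grind [SL.Valid]
  · simpa using ht

theorem succ_l {i : I} {j : ℕ} (hm : M i (.l j)) : (∃ k, 1 ≤ k ∧ j = k+1 ∧ Nx i (.l j) (.l k)) ∨ Nx i (.l j) .f ∨ (j = 1 ∧ Nx i (.l j) (.q 1)) := by
  have h2 := S.hc
  have hv := S.valid _ _ hm
  rcases S.succ _ _ hm with ⟨t, ht⟩ | ht
  · have he := S.edge _ _ _ ht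
    simp [SEdge] at he
    try grind [SL.Valid]
  · simpa using ht

theorem succ_z {i : I} (hm : M i (.z)) : Nx i .z (.r c) := by
  have h2 := S.hc
  have hv := S.valid _ _ hm
  rcases S.succ _ _ hm with ⟨t, ht⟩ | ht
  · have he := S.edge _ _ _ ht
    simp [SEdge] at he
    try grind [SL.Valid]
  · simpa using ht

theorem pred_z {i : I} (hm : M i (.z)) : ∃ j, 1 ≤ j ∧ j < c ∧ (Nx i (.w j) .z ∨ Nx i (.w' j) .z) := by
  have h2 := S.hc
  have hv := S.valid _ _ hm
  rcases S.pred _ _ hm with ⟨t, ht⟩ | ht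
  · have he := S.edge _ _ _ ht
    simp [SEdge] at he
    try grind [SL.Valid]
  · simpa using ht

theorem pred_y {i : I} (hm : M i (.y)) : Nx i (.w c) .y ∨ Nx i (.w' c) .y := by
  have h2 := S.hc
  have hv := S.valid _ _ hm
  rcases S.pred _ _ hm with ⟨t, ht⟩ | ht
  · have he := S.edge _ _ _ ht
    simp [SEdge] at he
    try grind [SL.Valid]
  · simpa using ht

theorem succ_y {i : I} (hm : M i (.y)) : Nx i .y (.l c) ∨ Out i .y := by
  have h2 := S.hc
  have hv := S.valid _ _ hm
  rcases S.succ _ _ hm with ⟨t, ht⟩ | ht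
  · have he := S.edge _ _ _ ht
    simp [SEdge] at he
    try grind [SL.Valid]
  · exact Or.inr ht.1

theorem succ_f {i : I} (hm : M i (.f)) : Nx i .f (.w 1) ∨ Nx i .f (.w' 1) := by
  have h2 := S.hc
  have hv := S.valid _ _ hm
  rcases S.succ _ _ hm with ⟨t, ht⟩ | ht
  · have he := S.edge _ _ _ ht
    simp [SEdge] at he
    try grind [SL.Valid]
  · simpa using ht

theorem succ_f' {i : I} (hm : M i (.f')) : Nx i .f' (.w 1) ∨ Nx i .f' (.w' 1) := by
  have h2 := S.hc
  have hv := S.valid _ _ hm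
  rcases S.succ _ _ hm with ⟨t, ht⟩ | ht
  · have he := S.edge _ _ _ ht
    simp [SEdge] at he
    try grind [SL.Valid]
  · simpa using ht

theorem pred_f {i : I} (hm : M i (.f)) : ∃ j, 1 ≤ j ∧ j ≤ c ∧ Nx i (.l j) .f := by
  have h2 := S.hc
  have hv := S.valid _ _ hm
  rcases S.pred _ _ hm with ⟨t, ht⟩ | ht
  · have he := S.edge _ _ _ ht
    simp [SEdge] at he
    try grind [SL.Valid]
  · simpa using ht

theorem pred_f' {i : I} (hm : M i (.f')) : Nx i (.q c) .f' := by
  have h2 := S.hc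
  have hv := S.valid _ _ hm
  rcases S.pred _ _ hm with ⟨t, ht⟩ | ht
  · have he := S.edge _ _ _ ht
    simp [SEdge] at he
    try grind [SL.Valid]
  · simpa using ht

theorem succ_w {i : I} {j : ℕ} (hm : M i (.w j)) : (j < c ∧ (Nx i (.w j) (.w (j+1)) ∨ Nx i (.w j) .z)) ∨ (j = c ∧ (Nx i (.w j) .y ∨ Nx i (.w j) .g)) := by
  have h2 := S.hc
  have hv := S.valid _ _ hm
  rcases S.succ _ _ hm with ⟨t, ht⟩ | ht
  · have he := S.edge _ _ _ ht
    simp [SEdge] at he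
    try grind [SL.Valid]
  · simpa using ht

theorem succ_w' {i : I} {j : ℕ} (hm : M i (.w' j)) : (j < c ∧ (Nx i (.w' j) (.w' (j+1)) ∨ Nx i (.w' j) .z)) ∨ (j = c ∧ (Nx i (.w' j) .y ∨ Nx i (.w' j) .g')) := by
  have h2 := S.hc
  have hv := S.valid _ _ hm
  rcases S.succ _ _ hm with ⟨t, ht⟩ | ht
  · have he := S.edge _ _ _ ht
    simp [SEdge] at he
    try grind [SL.Valid]
  · simpa using ht

theorem pred_w' {i : I} {j : ℕ} (hm : M i (.w' j)) : (j = 1 ∧ (Nx i .f (.w' j) ∨ Nx i .f' (.w' j))) ∨ (∃ k, 1 ≤ k ∧ j = k+1 ∧ Nx i (.w' k) (.w' j)) ∨ Nx i .g' (.w' j) := by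
  have h2 := S.hc
  have hv := S.valid _ _ hm
  rcases S.pred _ _ hm with ⟨t, ht⟩ | ht
  · have he := S.edge _ _ _ ht
    simp [SEdge] at he
    try grind [SL.Valid]
  · simpa using ht

theorem pred_g' {i : I} (hm : M i (.g')) : Nx i (.w' c) .g' ∨ Nx i .v' .g' := by
  have h2 := S.hc
  have hv := S.valid _ _ hm
  rcases S.pred _ _ hm with ⟨t, ht⟩ | ht
  · have he := S.edge _ _ _ ht
    simp [SEdge] at he
    try grind [SL.Valid]
  · simpa using ht

theorem pred_v' {i : I} (hm : M i (.v')) : Nx i .h' .v' := by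
  have h2 := S.hc
  have hv := S.valid _ _ hm
  rcases S.pred _ _ hm with ⟨t, ht⟩ | ht
  · have he := S.edge _ _ _ ht
    simp [SEdge] at he
    try grind [SL.Valid]
  · simpa using ht

theorem pred_h' {i : I} (hm : M i (.h')) : Nx i .u' .h' ∨ Nx i .d .h' := by
  have h2 := S.hc
  have hv := S.valid _ _ hm
  rcases S.pred _ _ hm with ⟨t, ht⟩ | ht
  · have he := S.edge _ _ _ ht
    simp [SEdge] at he
    try grind [SL.Valid]
  · simpa using ht

theorem pred_d {i : I} (hm : M i (.d)) : Inn i .d := by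
  have h2 := S.hc
  have hv := S.valid _ _ hm
  rcases S.pred _ _ hm with ⟨t, ht⟩ | ht
  · have he := S.edge _ _ _ ht
    simp [SEdge] at he
    try grind [SL.Valid]
  · simpa using ht

theorem succ_g {i : I} (hm : M i (.g)) : (∃ j, 1 ≤ j ∧ j ≤ c ∧ Nx i .g (.w j)) ∨ Nx i .g .u' := by
  have h2 := S.hc
  have hv := S.valid _ _ hm
  rcases S.succ _ _ hm with ⟨t, ht⟩ | ht
  · have he := S.edge _ _ _ ht
    simp [SEdge] at he
    try grind [SL.Valid]
  · simpa using ht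

theorem succ_u' {i : I} (hm : M i (.u')) : Nx i .u' .h' ∨ Nx i .u' .e := by
  have h2 := S.hc
  have hv := S.valid _ _ hm
  rcases S.succ _ _ hm with ⟨t, ht⟩ | ht
  · have he := S.edge _ _ _ ht
    simp [SEdge] at he
    try grind [SL.Valid]
  · simpa using ht

theorem succ_e {i : I} (hm : M i (.e)) : Out i .e := by
  have h2 := S.hc
  have hv := S.valid _ _ hm
  rcases S.succ _ _ hm with ⟨t, ht⟩ | ht
  · have he := S.edge _ _ _ ht
    simp [SEdge] at he
    try grind [SL.Valid]
  · simpa using ht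

theorem full {T : Finset I} {s : SL} (hs : SL.Valid c s) (hT : #T = c)
    (h : ∀ i ∈ T, M i s) : ∀ i, M i s → i ∈ T := by
  have hsub : T ⊆ ({i | M i s} : Finset I) := fun i hi => by simpa using h i hi
  have := Finset.eq_of_subset_of_card_le hsub (by rw [hT]; exact S.cap s hs)
  intro i hi
  rw [this]; simpa using hi

theorem p_to_x {i : I} (hi : i ∉ R) : ∀ n j, c - j = n → M i (.p j) → M i .x := by
  intro n
  induction n with
  | zero =>
    intro j hj hm
    have hv : 1 ≤ j ∧ j ≤ c := S.valid _ _ hm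
    rcases S.succ_p hm with h | h | h
    · omega
    · exact S.mr _ _ _ h.2
    · exact absurd ((S.red i).2 (S.mr _ _ _ h)) hi
  | succ n ih =>
    intro j hj hm
    rcases S.succ_p hm with h | h | h
    · exact ih (j+1) (by omega) (S.mr _ _ _ h.2)
    · exact S.mr _ _ _ h.2
    · exact absurd ((S.red i).2 (S.mr _ _ _ h)) hi

theorem bb_not_red {i : I} (hi : i ∈ Bb) : i ∉ R := Finset.disjoint_right.1 S.dRb hi
theorem bx_not_red {i : I} (hi : i ∈ Bx) : i ∉ R := Finset.disjoint_right.1 S.dRx hi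

theorem bb_bq {i : I} (hi : i ∈ Bb) (hx : ¬ M i .x) : Nx i .b (.q 1) := by
  rcases S.succ_b (S.mb i hi) with h | h
  · exact absurd (S.p_to_x (S.bb_not_red hi) _ _ rfl (S.mr _ _ _ h)) hx
  · exact h

theorem bb_q {i : I} (hi : i ∈ Bb) (hx : ¬ M i .x) : ∀ j, 1 ≤ j → j ≤ c → M i (.q j) := by
  intro j hj
  induction j, hj using Nat.le_induction with
  | base => intro _; exact S.mr _ _ _ (S.bb_bq hi hx)
  | succ j hj ih =>
    intro hjc
    rcases S.succ_q (ih (by omega)) with h | h | h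
    · exact S.mr _ _ _ h.2
    · omega
    · exact absurd (S.p_to_x (S.bb_not_red hi) _ _ rfl (S.mr _ _ _ h)) hx

theorem bb_f' {i : I} (hi : i ∈ Bb) (hx : ¬ M i .x) : M i .f' := by
  have h2 := S.hc
  rcases S.succ_q (S.bb_q hi hx c (by omega) le_rfl) with h | h | h
  · omega
  · exact S.mr _ _ _ h.2
  · exact absurd (S.p_to_x (S.bb_not_red hi) _ _ rfl (S.mr _ _ _ h)) hx

theorem red_no_b {i : I} (hi : i ∈ R) : ¬ M i .b := fun h =>
  S.bb_not_red (S.full (by simp [SL.Valid]) S.cBb S.mb i h) hi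

theorem red_q {i : I} (hi : i ∈ R) : ∃ j, 1 ≤ j ∧ j ≤ c ∧ Nx i (.q j) (.p j) := by
  have key : ∀ j, M i (.p j) → ∃ j, 1 ≤ j ∧ j ≤ c ∧ Nx i (.q j) (.p j) := by
    intro j
    induction j with
    | zero => intro hm; have hv : 1 ≤ 0 ∧ 0 ≤ c := S.valid _ _ hm; omega
    | succ j ih =>
      intro hm
      have hv : 1 ≤ j+1 ∧ j+1 ≤ c := S.valid _ _ hm
      rcases S.pred_p hm with h | ⟨k, h1, h2, h3⟩ | h
      · exact absurd (S.ml _ _ _ h.2) (S.red_no_b hi)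
      · obtain rfl : j = k := by omega
        exact ih (S.ml _ _ _ h3)
      · exact ⟨j+1, hv.1, hv.2, h⟩
  obtain ⟨j, _, _, h⟩ := S.pred_a ((S.red i).1 hi)
  exact key j (S.ml _ _ _ h)

theorem q_stage :
    #(Bb.filter (fun i => ¬ M i .x)) = c - 1 ∧
    (∀ i ∈ R, ∀ j k, M i (.q j) → M i (.q k) → j = k) ∧
    (∀ i, i ∈ Bx ∨ (i ∈ Bb ∧ M i .x) → ∀ j, ¬ M i (.q j)) ∧
    (∃ i ∈ R, M i (.q 1) ∧ ∀ i' ∈ R, M i' (.q 1) → i' = i) := by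
  have h2 := S.hc
  have hd : Disjoint (Bb.filter (fun i => M i .x)) Bx := S.dbx.mono_left (filter_subset _ _)
  have hcard : c - 1 ≤ #(Bb.filter (fun i => ¬ M i .x)) := by
    have h1 : #(Bb.filter (fun i => M i .x) ∪ Bx) ≤ c := by
      refine le_trans (Finset.card_le_card ?_) (S.cap .x (by simp [SL.Valid]))
      intro i hi
      simp only [mem_union, mem_filter, mem_univ, true_and] at hi ⊢
      rcases hi with h | h
      · exact h.2
      · exact S.mx i h
    rw [Finset.card_union_of_disjoint hd, S.cBx] at h1
    have h3 := Finset.card_filter_add_card_filter_not (s := Bb) (fun i => M i .x)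
    have h4 := S.cBb
    omega
  obtain ⟨t1, t2, t3, t4⟩ := tightAB c (by omega) (Bb.filter (fun i => ¬ M i .x)) R
    (S.dRb.symm.mono_left (filter_subset _ _)) (fun i j => M i (.q j))
    (fun j h1 h2 => S.cap _ ⟨h1, h2⟩)
    (fun i hi j h1 h2 => S.bb_q (mem_filter.1 hi).1 (mem_filter.1 hi).2 j h1 h2) hcard
    (fun i hi => by
      obtain ⟨j, h1, h2, h3⟩ := S.red_q hi
      exact ⟨j, h1, h2, S.ml _ _ _ h3⟩) S.cR
  refine ⟨t1, ?_, ?_, t4 1 le_rfl (by omega)⟩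
  · intro i hi j k hj hk
    have v1 : 1 ≤ j ∧ j ≤ c := S.valid _ _ hj
    have v2 : 1 ≤ k ∧ k ≤ c := S.valid _ _ hk
    exact t2 i hi j k v1.1 v1.2 v2.1 v2.2 hj hk
  · intro i hi j hj
    have v1 : 1 ≤ j ∧ j ≤ c := S.valid _ _ hj
    refine t3 i ?_ ?_ j v1.1 v1.2 hj
    · rcases hi with h | h
      · intro hh; exact Finset.disjoint_right.1 S.dbx h (mem_filter.1 hh).1
      · intro hh; exact (mem_filter.1 hh).2 h.2
    · rcases hi with h | h
      · exact S.bx_not_red h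
      · exact S.bb_not_red h.1

theorem cX : #(Bb.filter (fun i => M i .x) ∪ Bx) = c := by
  have h2 := S.hc
  have hd : Disjoint (Bb.filter (fun i => M i .x)) Bx := S.dbx.mono_left (filter_subset _ _)
  rw [Finset.card_union_of_disjoint hd, S.cBx]
  have h3 := Finset.card_filter_add_card_filter_not (s := Bb) (fun i => M i .x)
  have h4 := S.cBb
  have h5 := S.q_stage.1
  omega

theorem mX {i : I} (hi : i ∈ Bb.filter (fun i => M i .x) ∪ Bx) : M i .x := by
  simp only [mem_union, mem_filter] at hi
  rcases hi with h | h
  · exact h.2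
  · exact S.mx i h

theorem fullX {i : I} (h : M i .x) : i ∈ Bb.filter (fun i => M i .x) ∪ Bx :=
  S.full (by simp [SL.Valid]) S.cX (fun _ => S.mX) i h

theorem red_no_x {i : I} (hi : i ∈ R) : ¬ M i .x := by
  intro h
  have := S.fullX h
  simp only [mem_union, mem_filter] at this
  rcases this with h | h
  · exact S.bb_not_red h.1 hi
  · exact S.bx_not_red h hi

theorem x_no_q {i : I} (h : M i .x) (j : ℕ) : ¬ M i (.q j) := by
  have := S.fullX h
  simp only [mem_union, mem_filter] at this
  exact S.q_stage.2.2.1 i this.symm j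

theorem red_no_f' {i : I} (hi : i ∈ R) : ¬ M i .f' := by
  intro h
  have h1 := S.pred_f' h
  obtain ⟨j, _, _, h3⟩ := S.red_q hi
  obtain rfl := S.q_stage.2.1 i hi j c (S.ml _ _ _ h3) (S.ml _ _ _ h1)
  have := S.su _ _ _ _ h1 h3
  simp at this

/-- A red path through `r 1` has the full descending chain. -/
theorem red_r_chain {i : I} (hi : i ∈ R) (h : M i (.r 1)) :
    ∀ j, 1 ≤ j → (j < c → Nx i (.r (j+1)) (.r j)) ∧ (j ≤ c → M i (.r j)) := by
  have key : ∀ j, M i (.r j) → j < c → Nx i (.r (j+1)) (.r j) := by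
    intro j hm hj
    rcases S.pred_r hm with h | h | h
    · exact absurd (S.ml _ _ _ h) (S.red_no_x hi)
    · exact h.2
    · omega
  intro j hj
  have : j ≤ c → M i (.r j) := by
    induction j, hj using Nat.le_induction with
    | base => exact fun _ => h
    | succ j hj ih => exact fun hjc => S.ml _ _ _ (key j (ih (by omega)) (by omega))
  exact ⟨fun hj => key j (this hj.le) hj, this⟩

theorem red_r_z {i : I} (hi : i ∈ R) (h : M i (.r 1)) : M i .z := by
  have h2 := S.hc
  have hm := (S.red_r_chain hi h c (by omega)).2 le_rfl
  rcases S.pred_r hm with h | h | h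
  · exact absurd (S.ml _ _ _ h) (S.red_no_x hi)
  · omega
  · exact S.ml _ _ _ h.2

theorem red_r_of {i : I} (hi : i ∈ R) (h : ¬ M i (.q 1)) : ∃ k, Nx i (.r 1) (.q k) := by
  obtain ⟨j, _, _, h3⟩ := S.red_q hi
  have hm := S.ml _ _ _ h3
  rcases S.pred_q hm with h4 | ⟨k, h1, h4, h5⟩ | h4 | h4
  · exact absurd (h4.1 ▸ hm) h
  · have := S.q_stage.2.1 i hi j k hm (S.ml _ _ _ h5); omega
  · exact ⟨j, h4.2⟩
  · exact absurd (h4.1 ▸ hm) h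

theorem r_stage :
    (∀ i, M i .x → ∀ j k, M i (.r j) → M i (.r k) → j = k) ∧
    (∀ i ∈ Bb, ¬ M i .x → ∀ j, ¬ M i (.r j)) ∧
    (∀ i ∈ R, M i (.q 1) → ∀ j, ¬ M i (.r j)) := by
  have h2 := S.hc
  obtain ⟨ρ, hρ, hρq, hρu⟩ := S.q_stage.2.2.2
  have hXR : Disjoint (R.erase ρ) (Bb.filter (fun i => M i .x) ∪ Bx) := by
    rw [Finset.disjoint_left]
    intro i hi hx
    exact S.red_no_x (Finset.mem_of_mem_erase hi) (S.mX hx)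
  obtain ⟨t1, t2, t3, t4⟩ := tightAB c (by omega) (R.erase ρ)
    (Bb.filter (fun i => M i .x) ∪ Bx) hXR (fun i j => M i (.r j))
    (fun j h1 h2 => S.cap _ ⟨h1, h2⟩)
    (fun i hi j h1 h2 => by
      rw [Finset.mem_erase] at hi
      obtain ⟨k, hk⟩ := S.red_r_of hi.2 (fun h => hi.1 (hρu i hi.2 h))
      exact (S.red_r_chain hi.2 (S.ml _ _ _ hk) j h1).2 h2)
    (by rw [Finset.card_erase_of_mem hρ, S.cR])
    (fun i hi => by
      obtain ⟨j, h1, h2, h3⟩ := S.succ_x (S.mX hi)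
      exact ⟨j, h1, h2, S.mr _ _ _ h3⟩) S.cX
  refine ⟨?_, ?_, ?_⟩
  · intro i hi j k hj hk
    have v1 : 1 ≤ j ∧ j ≤ c := S.valid _ _ hj
    have v2 : 1 ≤ k ∧ k ≤ c := S.valid _ _ hk
    exact t2 i (S.fullX hi) j k v1.1 v1.2 v2.1 v2.2 hj hk
  · intro i hi hx j hj
    have v1 : 1 ≤ j ∧ j ≤ c := S.valid _ _ hj
    exact t3 i (fun h => S.bb_not_red hi (Finset.mem_of_mem_erase h)) (fun h => hx (S.mX h))
      j v1.1 v1.2 hj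
  · intro i hi hq j hj
    have v1 : 1 ≤ j ∧ j ≤ c := S.valid _ _ hj
    obtain rfl := hρu i hi hq
    exact t3 i (by simp) (fun h => S.red_no_x hi (S.mX h)) j v1.1 v1.2 hj

theorem blue_cases {i : I} (hi : i ∉ R) : M i .x ∨ (i ∈ Bb ∧ ¬ M i .x) := by
  by_cases h : M i .x
  · exact Or.inl h
  · rcases S.cover i with h1 | h1 | h1
    · exact absurd h1 hi
    · exact Or.inr ⟨h1, h⟩
    · exact Or.inl (S.mx i h1)

theorem blue_no_z {i : I} (hi : i ∉ R) : ¬ M i .z := by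
  intro hz
  have h := S.succ_z hz
  have hr := S.mr _ _ _ h
  rcases S.blue_cases hi with hx | ⟨hb, hx⟩
  · obtain ⟨j, _, _, h3⟩ := S.succ_x hx
    obtain rfl := S.r_stage.1 i hx j c (S.mr _ _ _ h3) hr
    have := S.pu _ _ _ _ h h3
    simp at this
  · exact S.r_stage.2.1 i hb hx c hr

/-- blue paths through `x` -/
theorem x_rl {i : I} (hx : M i .x) : ∃ j, 1 ≤ j ∧ j ≤ c ∧ Nx i (.r j) (.l j) := by
  obtain ⟨j, h1, h2, h3⟩ := S.succ_x hx
  have hr := S.mr _ _ _ h3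
  rcases S.succ_r hr with ⟨k, _, h5, h6⟩ | h4 | ⟨_, k, _, _, h6⟩
  · have := S.r_stage.1 i hx j k hr (S.mr _ _ _ h6); omega
  · exact ⟨j, h1, h2, h4⟩
  · exact absurd (S.mr _ _ _ h6) (S.x_no_q hx k)

theorem l_to_f {i : I} (hq : ¬ Nx i (.l 1) (.q 1)) :
    ∀ j, M i (.l j) → ∃ k, 1 ≤ k ∧ k ≤ j ∧ Nx i (.l k) .f := by
  intro j
  induction j with
  | zero => intro hm; have hv : 1 ≤ 0 ∧ 0 ≤ c := S.valid _ _ hm; omega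
  | succ j ih =>
    intro hm
    rcases S.succ_l hm with ⟨k, h1, h2, h3⟩ | h | h
    · obtain rfl : j = k := by omega
      obtain ⟨k, h4, h5, h6⟩ := ih (S.mr _ _ _ h3)
      exact ⟨k, h4, by omega, h6⟩
    · exact ⟨j+1, by omega, le_rfl, h⟩
    · obtain rfl : j = 0 := by omega
      exact absurd h.2 hq

theorem x_f {i : I} (hx : M i .x) : M i .f := by
  obtain ⟨j, _, _, h⟩ := S.x_rl hx
  obtain ⟨k, _, _, h⟩ := S.l_to_f (fun h => S.x_no_q hx 1 (S.mr _ _ _ h)) j (S.mr _ _ _ h)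
  exact S.mr _ _ _ h

theorem blue_w_start {i : I} (hi : i ∉ R) : M i (.w 1) ∨ M i (.w' 1) := by
  rcases S.blue_cases hi with hx | ⟨hb, hx⟩
  · exact (S.succ_f (S.x_f hx)).imp (S.mr _ _ _) (S.mr _ _ _)
  · exact (S.succ_f' (S.bb_f' hb hx)).imp (S.mr _ _ _) (S.mr _ _ _)

theorem blue_w_nx {i : I} (hi : i ∉ R) {j : ℕ} (hm : M i (.w j)) (hj : j < c) :
    Nx i (.w j) (.w (j+1)) := by
  rcases S.succ_w hm with ⟨_, h | h⟩ | h
  · exact h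
  · exact absurd (S.mr _ _ _ h) (S.blue_no_z hi)
  · omega

theorem blue_w'_nx {i : I} (hi : i ∉ R) {j : ℕ} (hm : M i (.w' j)) (hj : j < c) :
    Nx i (.w' j) (.w' (j+1)) := by
  rcases S.succ_w' hm with ⟨_, h | h⟩ | h
  · exact h
  · exact absurd (S.mr _ _ _ h) (S.blue_no_z hi)
  · omega

theorem blue_w_all {i : I} (hi : i ∉ R) (h : M i (.w 1)) : ∀ j, 1 ≤ j → j ≤ c → M i (.w j) := by
  intro j hj
  induction j, hj using Nat.le_induction with
  | base => exact fun _ => h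
  | succ j hj ih => exact fun hjc => S.mr _ _ _ (S.blue_w_nx hi (ih (by omega)) (by omega))

theorem blue_w'_all {i : I} (hi : i ∉ R) (h : M i (.w' 1)) :
    ∀ j, 1 ≤ j → j ≤ c → M i (.w' j) := by
  intro j hj
  induction j, hj using Nat.le_induction with
  | base => exact fun _ => h
  | succ j hj ih => exact fun hjc => S.mr _ _ _ (S.blue_w'_nx hi (ih (by omega)) (by omega))

/-- the red path through `q 1` runs down the whole `l` chain, coming from `y` -/
theorem rho_l {i : I} (hi : i ∈ R) (hq : M i (.q 1)) :
    Nx i (.l 1) (.q 1) ∧ (∀ j, 1 ≤ j → j < c → Nx i (.l (j+1)) (.l j)) ∧ M i .y := by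
  have h2 := S.hc
  have h1 : Nx i (.l 1) (.q 1) := by
    rcases S.pred_q hq with h4 | ⟨k, h1, h4, h5⟩ | h4 | h4
    · exact absurd (S.ml _ _ _ h4.2) (S.red_no_b hi)
    · omega
    · omega
    · exact h4.2
  have key : ∀ j, M i (.l j) → j < c → Nx i (.l (j+1)) (.l j) := by
    intro j hm hj
    rcases S.pred_l hm with h | h | h
    · exact absurd (S.ml _ _ _ h) (S.r_stage.2.2 i hi hq j)
    · exact h.2
    · omega
  have hall : ∀ j, 1 ≤ j → j ≤ c → M i (.l j) := by
    intro j hj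
    induction j, hj using Nat.le_induction with
    | base => exact fun _ => S.ml _ _ _ h1
    | succ j hj ih => exact fun hjc => S.ml _ _ _ (key j (ih (by omega)) (by omega))
  refine ⟨h1, fun j h1 h2 => key j (hall j h1 h2.le) h2, ?_⟩
  rcases S.pred_l (hall c (by omega) le_rfl) with h | h | h
  · exact absurd (S.ml _ _ _ h) (S.r_stage.2.2 i hi hq c)
  · omega
  · exact S.ml _ _ _ h.2

theorem red_w {i : I} (hi : i ∈ R) : ∃ j, 1 ≤ j ∧ j ≤ c ∧ (M i (.w j) ∨ M i (.w' j)) := by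
  have h2 := S.hc
  by_cases hq : M i (.q 1)
  · exact ⟨c, by omega, le_rfl, (S.pred_y (S.rho_l hi hq).2.2).imp (S.ml _ _ _) (S.ml _ _ _)⟩
  · obtain ⟨k, hk⟩ := S.red_r_of hi hq
    obtain ⟨j, h1, h2, h3⟩ := S.pred_z (S.red_r_z hi (S.ml _ _ _ hk))
    exact ⟨j, h1, h2.le, h3.imp (S.ml _ _ _) (S.ml _ _ _)⟩

theorem cBlue : #(univ.filter (fun i => i ∉ R)) = 2 * c - 1 := by
  have h2 := S.hc
  have : univ.filter (fun i => i ∉ R) = Bb ∪ Bx := by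
    ext i
    simp only [mem_filter, mem_univ, true_and, mem_union]
    constructor
    · intro h; exact (S.cover i).resolve_left h
    · rintro (h | h)
      · exact S.bb_not_red h
      · exact S.bx_not_red h
  rw [this, Finset.card_union_of_disjoint S.dbx, S.cBb, S.cBx]; omega

theorem w_stage :
    (∀ i ∉ R, ∀ j k, M i (.w j) → ¬ M i (.w' k)) ∧
    (∀ i ∈ R, ∀ j k, M i (.w' j) → M i (.w' k) → j = k) := by
  have h2 := S.hc
  set Q : Finset (ℕ ⊕ ℕ) := (Icc 1 c).disjSum (Icc 1 c) with hQ
  set T : I → ℕ ⊕ ℕ → Prop := fun i s => M i (Sum.elim SL.w SL.w' s) with hT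
  have hcases : ∀ s ∈ Q, (∃ j, 1 ≤ j ∧ j ≤ c ∧ s = .inl j) ∨ (∃ j, 1 ≤ j ∧ j ≤ c ∧ s = .inr j) := by
    intro s hs
    simp only [hQ, Finset.mem_disjSum, mem_Icc] at hs
    rcases hs with ⟨j, h, rfl⟩ | ⟨j, h, rfl⟩
    · exact Or.inl ⟨j, h.1, h.2, rfl⟩
    · exact Or.inr ⟨j, h.1, h.2, rfl⟩
  have hinl : ∀ j, 1 ≤ j → j ≤ c → Sum.inl j ∈ Q := fun j h1 h2 => by simp [hQ, h1, h2]
  have hinr : ∀ j, 1 ≤ j → j ≤ c → Sum.inr j ∈ Q := fun j h1 h2 => by simp [hQ, h1, h2]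
  have subL : ∀ i, i ∉ R → M i (.w 1) →
      (Icc 1 c).map ⟨Sum.inl, Sum.inl_injective⟩ ⊆ {s ∈ Q | T i s} := by
    intro i hi h s hs
    simp only [mem_map, mem_Icc, Function.Embedding.coeFn_mk] at hs
    obtain ⟨j, ⟨h1, h2⟩, rfl⟩ := hs
    exact mem_filter.2 ⟨hinl j h1 h2, S.blue_w_all hi h j h1 h2⟩
  have subR : ∀ i, i ∉ R → M i (.w' 1) →
      (Icc 1 c).map ⟨Sum.inr, Sum.inr_injective⟩ ⊆ {s ∈ Q | T i s} := by
    intro i hi h s hs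
    simp only [mem_map, mem_Icc, Function.Embedding.coeFn_mk] at hs
    obtain ⟨j, ⟨h1, h2⟩, rfl⟩ := hs
    exact mem_filter.2 ⟨hinr j h1 h2, S.blue_w'_all hi h j h1 h2⟩
  obtain ⟨t1, t2⟩ := tight Q T c
    (by
      intro s hs
      rcases hcases s hs with ⟨j, h1, h2, rfl⟩ | ⟨j, h1, h2, rfl⟩
      · exact S.cap _ ⟨h1, h2⟩
      · exact S.cap _ ⟨h1, h2⟩)
    (fun i => if i ∈ R then 1 else c)
    (by
      intro i
      by_cases hi : i ∈ R
      · simp only [hi, if_true]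
        obtain ⟨j, h1, h2, h3 | h3⟩ := S.red_w hi
        · exact Finset.card_pos.2 ⟨.inl j, mem_filter.2 ⟨hinl j h1 h2, h3⟩⟩
        · exact Finset.card_pos.2 ⟨.inr j, mem_filter.2 ⟨hinr j h1 h2, h3⟩⟩
      · simp only [hi, if_false]
        rcases S.blue_w_start hi with h | h
        · simpa using Finset.card_le_card (subL i hi h)
        · simpa using Finset.card_le_card (subR i hi h))
    (by
      have h3 := S.cBlue
      have h4 := S.cR
      rw [Finset.sum_ite]
      simp only [Finset.sum_const, smul_eq_mul, mul_one, h3, hQ, Finset.card_disjSum, Nat.card_Icc]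
      have : ({i | i ∈ R} : Finset I) = R := by ext; simp
      rw [this, h4]
      obtain ⟨k, rfl⟩ : ∃ k, c = k + 1 := ⟨c - 1, by omega⟩
      have : 2 * (k + 1) - 1 = 2 * k + 1 := by omega
      rw [this]
      simp only [Nat.add_sub_cancel]
      nlinarith)
  constructor
  · intro i hi j k hj hk
    have v1 : 1 ≤ j ∧ j ≤ c := S.valid _ _ hj
    have v2 : 1 ≤ k ∧ k ≤ c := S.valid _ _ hk
    have hcard := t1 i
    simp only [hi, if_false] at hcard
    rcases S.blue_w_start hi with h | h
    · have := Finset.eq_of_subset_of_card_le (subL i hi h) (by rw [hcard]; simp)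
      have hm : Sum.inr k ∈ ({s ∈ Q | T i s} : Finset (ℕ ⊕ ℕ)) := mem_filter.2 ⟨hinr k v2.1 v2.2, hk⟩
      rw [← this] at hm; simp at hm
    · have := Finset.eq_of_subset_of_card_le (subR i hi h) (by rw [hcard]; simp)
      have hm : Sum.inl j ∈ ({s ∈ Q | T i s} : Finset (ℕ ⊕ ℕ)) := mem_filter.2 ⟨hinl j v1.1 v1.2, hj⟩
      rw [← this] at hm; simp at hm
  · intro i hi j k hj hk
    have v1 : 1 ≤ j ∧ j ≤ c := S.valid _ _ hj
    have v2 : 1 ≤ k ∧ k ≤ c := S.valid _ _ hk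
    have hcard := t1 i
    simp only [hi, if_true] at hcard
    have := Finset.card_le_one.1 hcard.le (.inr j) (mem_filter.2 ⟨hinr j v1.1 v1.2, hj⟩)
      (.inr k) (mem_filter.2 ⟨hinr k v2.1 v2.2, hk⟩)
    simpa using this

theorem cnt {T : Finset I} {s : SL} (hs : SL.Valid c s) (hT : #T = c)
    (h : ∀ i ∈ T, M i s) : #{i | M i s} = c := by
  refine le_antisymm (S.cap s hs) ?_
  rw [← hT]
  exact Finset.card_le_card fun i hi => by simpa using h i hi

/-- blue paths never take `y → l c` -/
theorem blue_no_yl {i : I} (hi : i ∉ R) (h : Nx i .y (.l c)) : False := by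
  have hl := S.mr _ _ _ h
  rcases S.blue_cases hi with hx | ⟨hb, hx⟩
  · have hnq : ¬ Nx i (.l 1) (.q 1) := fun h => S.x_no_q hx 1 (S.mr _ _ _ h)
    obtain ⟨j, hj1, hjc, hj⟩ := S.x_rl hx
    obtain ⟨k, hk1, hkj, hk⟩ := S.l_to_f hnq j (S.mr _ _ _ hj)
    have step : ∀ m, k < m → M i (.l m) → Nx i (.l m) (.l (m-1)) := by
      intro m hm hml
      rcases S.succ_l hml with ⟨n, h1, h2, h3⟩ | h3 | h3
      · obtain rfl : n = m - 1 := by omega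
        exact h3
      · have := S.pu _ _ _ _ h3 hk
        simp at this; omega
      · obtain rfl := h3.1
        exact absurd h3.2 hnq
    have all : ∀ n, n + k ≤ c → M i (.l (c - n)) := by
      intro n
      induction n with
      | zero => intro _; exact hl
      | succ n ih =>
        intro hn
        have := S.mr _ _ _ (step (c - n) (by omega) (ih (by omega)))
        rwa [show c - n - 1 = c - (n+1) by omega] at this
    have hne : j ≠ c := by
      rintro rfl
      have := S.pu _ _ _ _ h hj
      simp at this
    have h1 := all (c - (j+1)) (by omega)
    rw [show c - (c - (j+1)) = j + 1 by omega] at h1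
    have h2 := step (j+1) (by omega) h1
    have := S.pu _ _ _ _ h2 hj
    simp at this
  · have hnq : ¬ Nx i (.l 1) (.q 1) := fun h => by
      have := S.pu _ _ _ _ h (S.bb_bq hb hx)
      simp at this
    obtain ⟨k, _, _, hk⟩ := S.l_to_f hnq c hl
    rcases S.succ_f (S.mr _ _ _ hk) with h1 | h1 <;>
    rcases S.succ_f' (S.bb_f' hb hx) with h2 | h2
    · have := S.pu _ _ _ _ h1 h2; simp at this
    · exact S.w_stage.1 i hi 1 1 (S.mr _ _ _ h1) (S.mr _ _ _ h2)
    · exact S.w_stage.1 i hi 1 1 (S.mr _ _ _ h2) (S.mr _ _ _ h1)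
    · have := S.pu _ _ _ _ h1 h2; simp at this

theorem red_v'g' (hnw : ∀ i ∈ R, ∀ j, ¬ M i (.w j)) {i : I} (hi : i ∈ R) : Nx i .v' .g' := by
  have h2 := S.hc
  -- only the special red path meets `y`
  have hny : ¬ M i (.q 1) → ∃ j, j < c ∧ M i (.w' j) := by
    intro hq
    obtain ⟨k, hk⟩ := S.red_r_of hi hq
    obtain ⟨j, h1, h2, h3 | h3⟩ := S.pred_z (S.red_r_z hi (S.ml _ _ _ hk))
    · exact absurd (S.ml _ _ _ h3) (hnw i hi j)
    · exact ⟨j, h2, S.ml _ _ _ h3⟩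
  have hwy : M i .y → Nx i (.w' c) .y := fun hy =>
    (S.pred_y hy).resolve_left fun h => hnw i hi c (S.ml _ _ _ h)
  have hyq : M i .y → M i (.q 1) := by
    intro hy
    by_contra hq
    obtain ⟨j, h1, h3⟩ := hny hq
    have := S.w_stage.2 i hi j c h3 (S.ml _ _ _ (hwy hy))
    omega
  have hnf : ¬ M i .f := by
    intro hf
    obtain ⟨k, hk1, hkc, hk⟩ := S.pred_f hf
    by_cases hq : M i (.q 1)
    · obtain ⟨r1, r2, r3⟩ := S.rho_l hi hq
      by_cases hk' : k = 1
      · subst hk'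
        have := S.su _ _ _ _ hk r1
        simp at this
      · have h3 := r2 (k-1) (by omega) (by omega)
        rw [show k - 1 + 1 = k by omega] at h3
        have := S.su _ _ _ _ hk h3
        simp at this
    · obtain ⟨m, hm⟩ := S.red_r_of hi hq
      have hnr : ∀ j, ¬ Nx i (.r j) (.l j) := by
        intro j hj
        have v : 1 ≤ j ∧ j ≤ c := S.valid _ _ (S.ml _ _ _ hj)
        by_cases hj' : j = 1
        · subst hj'
          have := S.su _ _ _ _ hj hm
          simp at this
        · have h3 := (S.red_r_chain hi (S.ml _ _ _ hm) (j-1) (by omega)).1 (by omega)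
          rw [show j - 1 + 1 = j by omega] at h3
          have := S.su _ _ _ _ hj h3
          simp at this
      have up : ∀ n j, c - j = n → M i (.l j) → M i .y := by
        intro n
        induction n with
        | zero =>
          intro j hj hm
          rcases S.pred_l hm with h | h | h
          · exact absurd h (hnr j)
          · omega
          · exact S.ml _ _ _ h.2
        | succ n ih =>
          intro j hj hm
          rcases S.pred_l hm with h | h | h
          · exact absurd h (hnr j)
          · exact ih (j+1) (by omega) (S.ml _ _ _ h.2)
          · exact S.ml _ _ _ h.2
      exact hq (hyq (up _ k rfl (S.ml _ _ _ hk)))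
  obtain ⟨j, h1, h3, h4⟩ := S.red_w hi
  have hw := h4.resolve_left (hnw i hi j)
  have hg : M i .g' := by
    rcases S.pred_w' hw with ⟨_, h | h⟩ | ⟨k, _, h5, h6⟩ | h
    · exact absurd (S.ml _ _ _ h) hnf
    · exact absurd (S.ml _ _ _ h) (S.red_no_f' hi)
    · have := S.w_stage.2 i hi j k hw (S.ml _ _ _ h6); omega
    · exact S.ml _ _ _ h
  rcases S.pred_g' hg with h | h
  · exfalso
    by_cases hq : M i (.q 1)
    · have := S.su _ _ _ _ h (hwy (S.rho_l hi hq).2.2)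
      simp at this
    · obtain ⟨k, h5, h6⟩ := hny hq
      have := S.w_stage.2 i hi k c h6 (S.ml _ _ _ h)
      omega
  · exact h

theorem final (hW : #(univ.filter (fun i => i ∉ R ∧ M i (.w 1))) = c) :
    (∀ i ∈ R, M i .d ∧ Inn i .d) ∧
    #{i | i ∉ R ∧ Out i .y} = c - 1 ∧ #{i | i ∉ R ∧ Out i .e} = c ∧
    #{i | M i .x} = c ∧ #{i | M i .y} = c ∧ #{i | M i .g'} = c ∧ #{i | M i .h'} = c := by
  have h2 := S.hc
  set W := univ.filter (fun i => i ∉ R ∧ M i (.w 1)) with hWd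
  set W' := univ.filter (fun i => i ∉ R ∧ ¬ M i (.w 1)) with hWd'
  have memW : ∀ i ∈ W, i ∉ R ∧ M i (.w 1) := fun i hi => by simpa [hWd] using hi
  have memW' : ∀ i ∈ W', i ∉ R ∧ M i (.w' 1) := fun i hi => by
    have : i ∉ R ∧ ¬ M i (.w 1) := by simpa [hWd'] using hi
    exact ⟨this.1, (S.blue_w_start this.1).resolve_left this.2⟩
  have cW' : #W' = c - 1 := by
    have h3 := Finset.card_filter_add_card_filter_not
      (s := univ.filter (fun i => i ∉ R)) (fun i => M i (.w 1))
    rw [Finset.filter_filter, Finset.filter_filter, S.cBlue] at h3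
    have h4 : #W + #W' = 2 * c - 1 := h3
    omega
  have hnw : ∀ i ∈ R, ∀ j, ¬ M i (.w j) := by
    intro i hi j hj
    have v : 1 ≤ j ∧ j ≤ c := S.valid _ _ hj
    have := S.full (s := .w j) v hW (fun i hi => S.blue_w_all (memW i hi).1 (memW i hi).2 j v.1 v.2)
      i hj
    exact (memW i this).1 hi
  have rv : ∀ i ∈ R, Nx i .v' .g' := fun i hi => S.red_v'g' hnw hi
  have rg : ∀ i ∈ R, M i .g' := fun i hi => S.mr _ _ _ (rv i hi)
  have rh : ∀ i ∈ R, M i .h' := fun i hi => S.ml _ _ _ (S.pred_v' (S.ml _ _ _ (rv i hi)))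
  have fg := S.full (s := .g') trivial S.cR rg
  have fh := S.full (s := .h') trivial S.cR rh
  obtain ⟨ρ, hρ, hρq, hρu⟩ := S.q_stage.2.2.2
  have hρW' : ρ ∉ W' := fun h => (memW' ρ h).1 hρ
  have cT : #(insert ρ W') = c := by rw [Finset.card_insert_of_notMem hρW', cW']; omega
  have W'y : ∀ i ∈ W', M i .y := by
    intro i hi
    obtain ⟨hr, hw⟩ := memW' i hi
    rcases S.succ_w' (S.blue_w'_all hr hw c (by omega) le_rfl) with h | ⟨_, h | h⟩
    · omega
    · exact S.mr _ _ _ h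
    · exact absurd (fg i (S.mr _ _ _ h)) hr
  have yT : ∀ i ∈ insert ρ W', M i .y := by
    intro i hi
    rcases Finset.mem_insert.1 hi with rfl | hi
    · exact (S.rho_l hρ hρq).2.2
    · exact W'y i hi
  have fy := S.full (s := .y) trivial cT yT
  have Wu : ∀ i ∈ W, M i .u' := by
    intro i hi
    obtain ⟨hr, hw⟩ := memW i hi
    have hg : M i .g := by
      rcases S.succ_w (S.blue_w_all hr hw c (by omega) le_rfl) with h | ⟨_, h | h⟩
      · omega
      · exfalso
        rcases Finset.mem_insert.1 (fy i (S.mr _ _ _ h)) with rfl | h'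
        · exact hr hρ
        · exact S.w_stage.1 i hr 1 1 hw (memW' i h').2
      · exact S.mr _ _ _ h
    rcases S.succ_g hg with ⟨j, h1, h3, h4⟩ | h
    · exfalso
      by_cases hj : j = 1
      · subst hj
        rcases S.blue_cases hr with hx | ⟨hb, hx⟩
        · rcases S.succ_f (S.x_f hx) with h | h
          · have := S.pu _ _ _ _ h h4; simp at this
          · exact S.w_stage.1 i hr 1 1 hw (S.mr _ _ _ h)
        · rcases S.succ_f' (S.bb_f' hb hx) with h | h
          · have := S.pu _ _ _ _ h h4; simp at this
          · exact S.w_stage.1 i hr 1 1 hw (S.mr _ _ _ h)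
      · have h5 := S.blue_w_nx hr (S.blue_w_all hr hw (j-1) (by omega) (by omega)) (by omega)
        rw [show j - 1 + 1 = j by omega] at h5
        have := S.pu _ _ _ _ h5 h4
        simp at this
    · exact S.mr _ _ _ h
  have fu := S.full (s := .u') trivial hW Wu
  have We : ∀ i ∈ W, Out i .e := by
    intro i hi
    rcases S.succ_u' (Wu i hi) with h | h
    · exact absurd (fh i (S.mr _ _ _ h)) (memW i hi).1
    · exact S.succ_e (S.mr _ _ _ h)
  have fe := S.full (s := .e) trivial hW (fun i hi => S.out_m i .e trivial (We i hi))
  refine ⟨?_, ?_, ?_, S.cnt (s := .x) trivial S.cX (fun _ => S.mX), S.cnt (s := .y) trivial cT yT,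
    S.cnt (s := .g') trivial S.cR rg, S.cnt (s := .h') trivial S.cR rh⟩
  · intro i hi
    have hd : M i .d := by
      rcases S.pred_h' (rh i hi) with h | h
      · exact absurd hi (memW i (fu i (S.ml _ _ _ h))).1
      · exact S.ml _ _ _ h
    exact ⟨hd, S.pred_d hd⟩
  · rw [← cW']
    congr 1
    ext i
    simp only [mem_filter, mem_univ, true_and]
    constructor
    · rintro ⟨hr, ho⟩
      rcases Finset.mem_insert.1 (fy i (S.out_m i .y trivial ho)) with rfl | h'
      · exact absurd hρ hr
      · exact h'
    · intro h
      exact ⟨(memW' i h).1, (S.succ_y (W'y i h)).resolve_left (S.blue_no_yl (memW' i h).1)⟩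
  · rw [← hW]
    congr 1
    ext i
    simp only [mem_filter, mem_univ, true_and]
    constructor
    · rintro ⟨hr, ho⟩
      exact fe i (S.out_m i .e trivial ho)
    · intro h
      exact ⟨(memW i h).1, We i h⟩

theorem dich : #(univ.filter (fun i => i ∉ R ∧ M i (.w 1))) = c ∨
    #(univ.filter (fun i => i ∉ R ∧ M i (.w' 1))) = c := by
  have h2 := S.hc
  have h3 := Finset.card_filter_add_card_filter_not
    (s := univ.filter (fun i => i ∉ R)) (fun i => M i (.w 1))
  rw [Finset.filter_filter, Finset.filter_filter, S.cBlue] at h3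
  have h4 : #(univ.filter (fun i => i ∉ R ∧ ¬ M i (.w 1))) ≤
      #(univ.filter (fun i => i ∉ R ∧ M i (.w' 1))) := by
    apply Finset.card_le_card
    intro i hi
    simp only [mem_filter, mem_univ, true_and] at hi ⊢
    exact ⟨hi.1, (S.blue_w_start hi.1).resolve_left hi.2⟩
  have h5 : #(univ.filter (fun i => i ∉ R ∧ M i (.w 1))) ≤ c :=
    (Finset.card_le_card (by intro i; simp)).trans (S.cap (.w 1) ⟨le_rfl, by omega⟩)
  have h6 : #(univ.filter (fun i => i ∉ R ∧ M i (.w' 1))) ≤ c :=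
    (Finset.card_le_card (by intro i; simp)).trans (S.cap (.w' 1) ⟨le_rfl, by omega⟩)
  omega

end Sys

/-- The symmetry of the gadget. -/
def sw : SL → SL
  | .g => .g' | .g' => .g | .h => .h' | .h' => .h | .u => .u' | .u' => .u
  | .v => .v' | .v' => .v | .w i => .w' i | .w' i => .w i | s => s

theorem sw_sw (s : SL) : sw (sw s) = s := by cases s <;> rfl

theorem sw_valid {c : ℕ} (s : SL) : SL.Valid c (sw s) ↔ SL.Valid c s := by cases s <;> rfl

theorem sw_edge {c : ℕ} {s t : SL} (h : SEdge c s t) : SEdge c (sw s) (sw t) := by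
  rcases h with ⟨rfl, rfl⟩ | ⟨i, h1, h2, rfl, rfl⟩ | ⟨rfl, rfl⟩ | ⟨i, h1, h2, rfl, rfl⟩ | ⟨rfl, rfl⟩ | ⟨i, h1,
    h2, rfl, rfl⟩ | ⟨rfl, rfl⟩ | ⟨i, h1, h2, rfl, rfl⟩ | ⟨i, h1, h2, rfl, rfl⟩ | ⟨i, h1, h2, rfl,
    rfl⟩ | ⟨rfl, rfl⟩ | ⟨i, h1, h2, rfl, rfl⟩ | ⟨i, h1, h2, rfl, rfl⟩ | ⟨i, h1, h2, rfl, rfl⟩ |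
    ⟨rfl, rfl⟩ | ⟨i, h1, h2, rfl, rfl⟩ | ⟨rfl, rfl⟩ | ⟨rfl | rfl, rfl | rfl⟩ | ⟨i, h1, h2, ⟨rfl,
    rfl⟩ | ⟨rfl, rfl⟩⟩ | ⟨i, h1, h2, rfl | rfl, rfl⟩ | ⟨rfl | rfl, rfl⟩ | ⟨rfl, rfl⟩ | ⟨rfl, rfl⟩ |
    ⟨i, h1, h2, ⟨rfl, rfl⟩ | ⟨rfl, rfl⟩⟩ | ⟨rfl, rfl⟩ | ⟨rfl, rfl⟩ | ⟨rfl, rfl⟩ | ⟨rfl, rfl⟩ |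
    ⟨rfl, rfl⟩ | ⟨rfl, rfl⟩ | ⟨rfl, rfl⟩ | ⟨rfl, rfl⟩ | ⟨rfl, rfl⟩ | ⟨rfl, rfl⟩ | ⟨rfl, rfl⟩ |
    ⟨rfl, rfl⟩
  all_goals simp [SEdge, sw]
  all_goals omega

theorem Sys.swap {c : ℕ} {I : Type} [Fintype I] {M : I → SL → Prop} {Nx : I → SL → SL → Prop}
    {Out Inn : I → SL → Prop} {R Bb Bx : Finset I} (S : Sys c M Nx Out Inn R Bb Bx) :
    Sys c (fun i s => M i (sw s)) (fun i s t => Nx i (sw s) (sw t)) (fun i s => Out i (sw s))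
      (fun i s => Inn i (sw s)) R Bb Bx where
  hc := S.hc
  valid i s h := (sw_valid s).1 (S.valid _ _ h)
  edge i s t h := by simpa [sw_sw] using sw_edge (S.edge _ _ _ h)
  ml i s t h := S.ml _ _ _ h
  mr i s t h := S.mr _ _ _ h
  su i s t t' h h' := by simpa [sw_sw] using congrArg sw (S.su _ _ _ _ h h')
  pu i s t t' h h' := by simpa [sw_sw] using congrArg sw (S.pu _ _ _ _ h h')
  succ i s h := by
    rcases S.succ _ _ h with ⟨t, ht⟩ | ⟨h1, h2⟩
    · exact Or.inl ⟨sw t, by simpa [sw_sw] using ht⟩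
    · refine Or.inr ⟨h1, ?_⟩
      cases s <;> simp [sw] at h2 ⊢
  pred i s h := by
    rcases S.pred _ _ h with ⟨t, ht⟩ | ⟨h1, h2⟩
    · exact Or.inl ⟨sw t, by simpa [sw_sw] using ht⟩
    · refine Or.inr ⟨h1, ?_⟩
      cases s <;> simp [sw] at h2 ⊢
  out_m i s hv h := S.out_m _ _ ((sw_valid s).2 hv) h
  cap s hs := S.cap _ ((sw_valid s).2 hs)
  red := S.red
  cR := S.cR
  cBb := S.cBb
  cBx := S.cBx
  dRb := S.dRb
  dRx := S.dRx
  dbx := S.dbx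
  cover := S.cover
  mb := S.mb
  mx := S.mx

theorem Sys.concl {c : ℕ} {I : Type} [Fintype I] {M : I → SL → Prop} {Nx : I → SL → SL → Prop}
    {Out Inn : I → SL → Prop} {R Bb Bx : Finset I} (S : Sys c M Nx Out Inn R Bb Bx) :
    (∀ i ∈ R, M i .d ∧ Inn i .d) ∧
    #{i | i ∉ R ∧ Out i .y} = c - 1 ∧ #{i | i ∉ R ∧ Out i .e} = c ∧
    #{i | M i .x} = c ∧ #{i | M i .y} = c ∧
    ((#{i | M i .g} = c ∧ #{i | M i .h} = c) ∨ (#{i | M i .g'} = c ∧ #{i | M i .h'} = c)) := by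
  rcases S.dich with h | h
  · obtain ⟨h1, h2, h3, h4, h5, h6⟩ := S.final h
    exact ⟨h1, h2, h3, h4, h5, Or.inr h6⟩
  · obtain ⟨h1, h2, h3, h4, h5, h6⟩ := S.swap.final h
    exact ⟨h1, h2, h3, h4, h5, Or.inl h6⟩

end SwitchAux

/-- **the switch gadget works.** -/
theorem stmt11 {V : Type*} (c : ℕ) (hc : 2 ≤ c) (G : Dgraph V)
    (ι : SL → V) (Gad : Set V)
    (hGadDef : Gad = ι '' {l : SL | SL.Valid c l})
    (hinj : Set.InjOn ι {l : SL | SL.Valid c l})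
    (hmem : ∀ l : SL, SL.Valid c l → ι l ∈ G.verts)
    -- the edges of `G` between two gadget vertices are exactly those of `S(c)`
    (hedge_iff : ∀ l l' : SL, SL.Valid c l → SL.Valid c l' →
      (G.Edge (ι l) (ι l') ↔ SEdge c l l'))
    -- every edge of `G` between a gadget vertex and a non-gadget vertex enters
    -- at `b, x, d, u, u'` or leaves at `a, e, y, v, v'`
    (hboundary : ∀ z w : V, G.Edge z w →
      ((z ∈ Gad ∧ w ∉ Gad) ∨ (z ∉ Gad ∧ w ∈ Gad)) →
      (w ∈ ({ι SL.b, ι SL.x, ι SL.d, ι SL.u, ι SL.u'} : Set V) ∧ z ∉ Gad) ∨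
      (z ∈ ({ι SL.a, ι SL.e, ι SL.y, ι SL.v, ι SL.v'} : Set V) ∧ w ∉ Gad))
    (P : Fin (3 * c - 1) → List V)
    (hPdist : Function.Injective P)
    (hPpath : ∀ idx, G.IsPath (P idx))
    -- every vertex of `G` lies on at most `c` of the paths
    (hcong : ∀ z ∈ G.verts, {idx | z ∈ P idx}.ncard ≤ c)
    -- no path starts or ends in the gadget
    (hends : ∀ idx z, ((P idx).head? = some z ∨ (P idx).getLast? = some z) →
      z ∉ Gad)
    (R Bb Bx : Set (Fin (3 * c - 1)))
    -- exactly `c` paths (the red ones) contain the vertex `a`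
    (hRdef : R = {idx | ι SL.a ∈ P idx})
    (hRcard : R.ncard = c)
    -- `c` other paths enter at `b`, and the remaining `c − 1` paths enter at `x`
    (hBbcard : Bb.ncard = c) (hBxcard : Bx.ncard = c - 1)
    (hRBb : Disjoint R Bb) (hRBx : Disjoint R Bx) (hBbBx : Disjoint Bb Bx)
    (hcover : R ∪ Bb ∪ Bx = Set.univ)
    (hBb : ∀ idx ∈ Bb, ∃ n z, (P idx)[n]? = some z ∧
      (P idx)[n + 1]? = some (ι SL.b))
    (hBx : ∀ idx ∈ Bx, ∃ n z, (P idx)[n]? = some z ∧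
      (P idx)[n + 1]? = some (ι SL.x)) :
    -- (1) the red paths enter the gadget at `d`
    (∀ idx ∈ R, ι SL.d ∈ P idx ∧
      ∃ n z, (P idx)[n]? = some z ∧ (P idx)[n + 1]? = some (ι SL.d) ∧ z ∉ Gad) ∧
    -- (2) exactly `c − 1` blue paths leave at `y` and exactly `c` leave at `e`
    ({idx | idx ∈ Bb ∪ Bx ∧ ∃ n z, (P idx)[n]? = some (ι SL.y) ∧
      (P idx)[n + 1]? = some z ∧ z ∉ Gad}.ncard = c - 1) ∧
    ({idx | idx ∈ Bb ∪ Bx ∧ ∃ n z, (P idx)[n]? = some (ι SL.e) ∧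
      (P idx)[n + 1]? = some z ∧ z ∉ Gad}.ncard = c) ∧
    -- (3) `x` and `y` each lie on exactly `c` of the paths
    ({idx | ι SL.x ∈ P idx}.ncard = c ∧ {idx | ι SL.y ∈ P idx}.ncard = c) ∧
    -- (4) either `g` and `h`, or `g'` and `h'`, each lie on exactly `c` paths
    (({idx | ι SL.g ∈ P idx}.ncard = c ∧ {idx | ι SL.h ∈ P idx}.ncard = c) ∨
     ({idx | ι SL.g' ∈ P idx}.ncard = c ∧
      {idx | ι SL.h' ∈ P idx}.ncard = c)) := by
  classical
  have chain : ∀ (i) (n : ℕ) (z w : V), (P i)[n]? = some z → (P i)[n+1]? = some w → G.Edge z w := by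
    intro i n z w h1 h2
    have hch := (hPpath i).2.2.1
    rw [List.Chain', List.isChain_iff_getElem] at hch
    obtain ⟨hn, rfl⟩ := List.getElem?_eq_some_iff.1 h1
    obtain ⟨hn', rfl⟩ := List.getElem?_eq_some_iff.1 h2
    exact hch n hn'
  have nd : ∀ (i) (n m : ℕ) (z : V), (P i)[n]? = some z → (P i)[m]? = some z → n = m := by
    intro i n m z h1 h2
    obtain ⟨hn, rfl⟩ := List.getElem?_eq_some_iff.1 h1
    obtain ⟨hm, h3⟩ := List.getElem?_eq_some_iff.1 h2
    exact ((hPpath i).2.1.getElem_inj_iff.1 h3).symm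
  have gad : ∀ s, SL.Valid c s → ι s ∈ Gad := fun s hs => by
    rw [hGadDef]; exact ⟨s, hs, rfl⟩
  have gad' : ∀ z ∈ Gad, ∃ s, SL.Valid c s ∧ z = ι s := fun z hz => by
    rw [hGadDef] at hz; obtain ⟨s, hs, rfl⟩ := hz; exact ⟨s, hs, rfl⟩
  have inj : ∀ s t, SL.Valid c s → SL.Valid c t → ι s = ι t → s = t :=
    fun s t hs ht h => hinj hs ht h
  have S : SwitchAux.Sys c (fun i s => SL.Valid c s ∧ ι s ∈ P i)
      (fun i s t => SL.Valid c s ∧ SL.Valid c t ∧ ∃ n, (P i)[n]? = some (ι s) ∧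
        (P i)[n+1]? = some (ι t))
      (fun i s => ∃ n z, (P i)[n]? = some (ι s) ∧ (P i)[n + 1]? = some z ∧ z ∉ Gad)
      (fun i s => ∃ n z, (P i)[n]? = some z ∧ (P i)[n + 1]? = some (ι s) ∧ z ∉ Gad)
      R.toFinset Bb.toFinset Bx.toFinset := by
    refine
      { hc := hc
        valid := fun i s h => h.1
        edge := ?_
        ml := ?_
        mr := ?_
        su := ?_
        pu := ?_
        succ := ?_
        pred := ?_
        out_m := ?_
        cap := ?_
        red := ?_
        cR := ?_
        cBb := ?_
        cBx := ?_
        dRb := by simpa using hRBb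
        dRx := by simpa using hRBx
        dbx := by simpa using hBbBx
        cover := ?_
        mb := ?_
        mx := ?_ }
    · rintro i s t ⟨hs, ht, n, h1, h2⟩
      exact (hedge_iff s t hs ht).1 (chain i n _ _ h1 h2)
    · rintro i s t ⟨hs, ht, n, h1, h2⟩
      exact ⟨hs, List.mem_of_getElem? h1⟩
    · rintro i s t ⟨hs, ht, n, h1, h2⟩
      exact ⟨ht, List.mem_of_getElem? h2⟩
    · rintro i s t t' ⟨hs, ht, n, h1, h2⟩ ⟨_, ht', m, h3, h4⟩
      obtain rfl := nd i n m _ h1 h3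
      exact inj t t' ht ht' (Option.some.inj (h2.symm.trans h4))
    · rintro i s s' t ⟨hs, ht, n, h1, h2⟩ ⟨hs', _, m, h3, h4⟩
      obtain rfl : n = m := by have := nd i (n+1) (m+1) _ h2 h4; omega
      exact inj s s' hs hs' (Option.some.inj (h1.symm.trans h3))
    · rintro i s ⟨hs, hm⟩
      obtain ⟨n, hn⟩ := List.mem_iff_getElem?.1 hm
      cases hz : (P i)[n+1]? with
      | none =>
        exfalso
        refine hends i (ι s) (Or.inr ?_) (gad s hs)
        rw [List.getElem?_eq_none_iff] at hz
        obtain ⟨hn', _⟩ := List.getElem?_eq_some_iff.1 hn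
        rw [List.getLast?_eq_getElem?, show (P i).length - 1 = n by omega, hn]
      | some z =>
        have he := chain i n _ _ hn hz
        by_cases hzg : z ∈ Gad
        · obtain ⟨t, ht, rfl⟩ := gad' z hzg
          exact Or.inl ⟨t, hs, ht, n, hn, hz⟩
        · refine Or.inr ⟨⟨n, z, hn, hz, hzg⟩, ?_⟩
          rcases hboundary _ _ he (Or.inl ⟨gad s hs, hzg⟩) with h | h
          · exact absurd (gad s hs) h.2
          · rcases h.1 with h | h | h | h | h
            · exact Or.inl (inj _ _ hs trivial h)
            · exact Or.inr (Or.inl (inj _ _ hs trivial h))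
            · exact Or.inr (Or.inr (Or.inl (inj _ _ hs trivial h)))
            · exact Or.inr (Or.inr (Or.inr (Or.inl (inj _ _ hs trivial h))))
            · exact Or.inr (Or.inr (Or.inr (Or.inr (inj _ _ hs trivial h))))
    · rintro i s ⟨hs, hm⟩
      obtain ⟨n, hn⟩ := List.mem_iff_getElem?.1 hm
      cases n with
      | zero =>
        exfalso
        refine hends i (ι s) (Or.inl ?_) (gad s hs)
        rw [List.head?_eq_getElem?, hn]
      | succ n =>
        obtain ⟨hn', _⟩ := List.getElem?_eq_some_iff.1 hn
        obtain ⟨z, hz⟩ : ∃ z, (P i)[n]? = some z :=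
          ⟨(P i)[n]'(by omega), List.getElem?_eq_getElem (by omega)⟩
        have he := chain i n _ _ hz hn
        by_cases hzg : z ∈ Gad
        · obtain ⟨t, ht, rfl⟩ := gad' z hzg
          exact Or.inl ⟨t, ht, hs, n, hz, hn⟩
        · refine Or.inr ⟨⟨n, z, hz, hn, hzg⟩, ?_⟩
          rcases hboundary _ _ he (Or.inr ⟨hzg, gad s hs⟩) with h | h
          · rcases h.1 with h | h | h | h | h
            · exact Or.inl (inj _ _ hs trivial h)
            · exact Or.inr (Or.inl (inj _ _ hs trivial h))
            · exact Or.inr (Or.inr (Or.inl (inj _ _ hs trivial h)))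
            · exact Or.inr (Or.inr (Or.inr (Or.inl (inj _ _ hs trivial h))))
            · exact Or.inr (Or.inr (Or.inr (Or.inr (inj _ _ hs trivial h))))
          · exact absurd (gad s hs) h.2
    · rintro i s hs ⟨n, z, h1, _⟩
      exact ⟨hs, List.mem_of_getElem? h1⟩
    · intro s hs
      have := hcong (ι s) (hmem s hs)
      rw [Set.ncard_eq_toFinset_card'] at this
      refine le_trans (le_of_eq ?_) this
      congr 1
      ext i
      simp [hs]
    · intro i
      rw [Set.mem_toFinset, hRdef]
      exact ⟨fun h => ⟨trivial, h⟩, fun h => h.2⟩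
    · rw [← Set.ncard_eq_toFinset_card', hRcard]
    · rw [← Set.ncard_eq_toFinset_card', hBbcard]
    · rw [← Set.ncard_eq_toFinset_card', hBxcard]
    · intro i
      have : i ∈ R ∪ Bb ∪ Bx := by rw [hcover]; trivial
      simp only [Set.mem_toFinset]
      rcases this with (h | h) | h
      · exact Or.inl h
      · exact Or.inr (Or.inl h)
      · exact Or.inr (Or.inr h)
    · intro i hi
      obtain ⟨n, z, _, h⟩ := hBb i (by simpa using hi)
      exact ⟨trivial, List.mem_of_getElem? h⟩
    · intro i hi
      obtain ⟨n, z, _, h⟩ := hBx i (by simpa using hi)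
      exact ⟨trivial, List.mem_of_getElem? h⟩
  have blue : ∀ i, i ∈ Bb ∪ Bx ↔ i ∉ R.toFinset := by
    intro i
    rw [Set.mem_toFinset]
    constructor
    · rintro (h | h) hr
      · exact Set.disjoint_left.1 hRBb hr h
      · exact Set.disjoint_left.1 hRBx hr h
    · intro h
      have : i ∈ R ∪ Bb ∪ Bx := by rw [hcover]; trivial
      rcases this with (h' | h') | h'
      · exact absurd h' h
      · exact Or.inl h'
      · exact Or.inr h'
  have cv : ∀ s : SL, SL.Valid c s →
      {i | ι s ∈ P i}.ncard = (Finset.univ.filter (fun i => SL.Valid c s ∧ ι s ∈ P i)).card := by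
    intro s hs
    rw [Set.ncard_eq_toFinset_card']
    congr 1
    ext i
    simp [hs]
  obtain ⟨h1, h2, h3, h4, h5, h6⟩ := S.concl
  refine ⟨?_, ?_, ?_, ⟨?_, ?_⟩, ?_⟩
  · intro i hi
    obtain ⟨a1, a2⟩ := h1 i (by simpa using hi)
    exact ⟨a1.2, a2⟩
  · rw [Set.ncard_eq_toFinset_card', ← h2]
    congr 1
    ext i
    simp only [Set.mem_toFinset, Set.mem_ofPred_eq, Finset.mem_filter, Finset.mem_univ, true_and]
    rw [blue i, Set.mem_toFinset]
  · rw [Set.ncard_eq_toFinset_card']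
    refine Eq.trans ?_ h3
    congr 1
    ext i
    simp only [Set.mem_toFinset, Set.mem_ofPred_eq, Finset.mem_filter, Finset.mem_univ, true_and]
    rw [blue i, Set.mem_toFinset]
  · rw [cv .x trivial]; convert h4
  · rw [cv .y trivial]; convert h5
  · rw [cv .g trivial, cv .h trivial, cv .g' trivial, cv .h' trivial]
    convert h6
end

section
/- Let c ≥ 2 and let G be the digraph with pairwise distinct vertices s1, s2, s3, t1, t1', t2, t3 and u_1, …, u_c, v_1, …, v_c, whose edge set consists exactly of: u_i→u_{i+1} and v_i→v_{i+1} for 1 ≤ i ≤ c−1; s2→u_1, s2→v_1, s3→u_1, s3→v_1; u_c→t2, v_c→t2, u_c→t3, v_c→t3; and s1→u_i, s1→v_i, u_i→t1, v_i→t1' for 1 ≤ i ≤ c. Then there is no family of 3c−1 directed paths P_1, …, P_{3c−1} in G such that every vertex of G lies on at most c of the paths, each of P_1, …, P_{2c−1} starts at s2 or s3 and ends at t2 or t3, each of P_{2c}, …, P_{3c−1} starts at s1 and ends at t1 or t1', and among P_{2c}, …, P_{3c−1} at least one path ends at t1 and at least one path ends at t1'. -/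
theorem chain_succ {V : Type*} {R : V → V → Prop} (p : List V) (h : p.IsChain R) (x l : V)
    (hx : x ∈ p) (hl : p.getLast? = some l) (hne : x ≠ l) : ∃ y ∈ p, R x y := by
  induction p with
  | nil => simp at hx
  | cons a q ih =>
    cases q with
    | nil => simp_all
    | cons b r =>
      rw [List.isChain_cons_cons] at h
      rcases List.mem_cons.1 hx with rfl | hx
      · exact ⟨b, by simp, h.1⟩
      · obtain ⟨y, hy, hr⟩ := ih h.2 hx (by simpa using hl)
        exact ⟨y, List.mem_cons_of_mem _ hy, hr⟩

theorem chain_pred {V : Type*} {R : V → V → Prop} (p : List V) (h : p.IsChain R) (x l : V)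
    (hx : x ∈ p) (hl : p.head? = some l) (hne : x ≠ l) : ∃ y ∈ p, R y x := by
  induction p generalizing l with
  | nil => simp at hx
  | cons a q ih =>
    cases q with
    | nil => simp_all
    | cons b r =>
      rw [List.isChain_cons_cons] at h
      rcases List.mem_cons.1 hx with rfl | hx
      · simp_all
      · by_cases hb : x = b
        · subst hb
          exact ⟨a, by simp, h.1⟩
        · obtain ⟨y, hy, hr⟩ := ih h.2 b hx (by simp) hb
          exact ⟨y, List.mem_cons_of_mem _ hy, hr⟩

set_option maxHeartbeats 4000000 in
/-- In the digraph consisting of the vertices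
`s1, s2, s3, t1, t1', t2, t3, u 1, …, u c, v 1, …, v c` (pairwise distinct) with
exactly the prescribed edges, there is no family of `3c − 1` directed paths,
each vertex on at most `c` of them, where the first `2c − 1` paths run from
`s2`/`s3` to `t2`/`t3`, the last `c` run from `s1` to `t1` or `t1'`, and among
the last `c` at least one ends at `t1` and at least one ends at `t1'`. -/
theorem stmt12 {V : Type*} (c : ℕ) (hc : 2 ≤ c) (G : Dgraph V)
    (s1 s2 s3 t1 t1' t2 t3 : V) (u v : ℕ → V)
    (hdist7 : List.Pairwise (· ≠ ·) [s1, s2, s3, t1, t1', t2, t3])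
    (huinj : Set.InjOn u (Set.Icc 1 c)) (hvinj : Set.InjOn v (Set.Icc 1 c))
    (huv : ∀ i ∈ Set.Icc 1 c, ∀ j ∈ Set.Icc 1 c, u i ≠ v j)
    (hun : ∀ i ∈ Set.Icc 1 c, u i ∉ ({s1, s2, s3, t1, t1', t2, t3} : Set V))
    (hvn : ∀ i ∈ Set.Icc 1 c, v i ∉ ({s1, s2, s3, t1, t1', t2, t3} : Set V))
    (hverts : G.verts = ({s1, s2, s3, t1, t1', t2, t3} : Set V) ∪
      u '' Set.Icc 1 c ∪ v '' Set.Icc 1 c)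
    (hedges : ∀ z w : V, G.Edge z w ↔
      ((∃ i, 1 ≤ i ∧ i + 1 ≤ c ∧
          ((z = u i ∧ w = u (i + 1)) ∨ (z = v i ∧ w = v (i + 1)))) ∨
       ((z = s2 ∨ z = s3) ∧ (w = u 1 ∨ w = v 1)) ∨
       ((z = u c ∨ z = v c) ∧ (w = t2 ∨ w = t3)) ∨
       (∃ i, 1 ≤ i ∧ i ≤ c ∧
          ((z = s1 ∧ (w = u i ∨ w = v i)) ∨ (z = u i ∧ w = t1) ∨
           (z = v i ∧ w = t1'))))) :
    ¬ ∃ P : Fin (3 * c - 1) → List V,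
      (∀ idx, G.IsPath (P idx)) ∧
      (∀ z ∈ G.verts, {idx | z ∈ P idx}.ncard ≤ c) ∧
      (∀ idx : Fin (3 * c - 1), (idx : ℕ) < 2 * c - 1 →
        ((P idx).head? = some s2 ∨ (P idx).head? = some s3) ∧
        ((P idx).getLast? = some t2 ∨ (P idx).getLast? = some t3)) ∧
      (∀ idx : Fin (3 * c - 1), 2 * c - 1 ≤ (idx : ℕ) →
        (P idx).head? = some s1 ∧
        ((P idx).getLast? = some t1 ∨ (P idx).getLast? = some t1')) ∧
      (∃ idx : Fin (3 * c - 1), 2 * c - 1 ≤ (idx : ℕ) ∧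
        (P idx).getLast? = some t1) ∧
      (∃ idx : Fin (3 * c - 1), 2 * c - 1 ≤ (idx : ℕ) ∧
        (P idx).getLast? = some t1') := by
  rintro ⟨P, hP, hcap, hA, hB, ⟨a, ha, hat⟩, ⟨b, hb, hbt⟩⟩
  classical
  simp only [Set.mem_Icc, Set.mem_insert_iff, Set.mem_singleton_iff, not_or] at hun hvn huv
  simp only [List.pairwise_cons, List.mem_cons, List.not_mem_nil, or_false] at hdist7
  have hch : ∀ i, (P i).IsChain G.Edge := fun i => (hP i).2.2.1
  have hu1 : ∀ i, 1 ≤ i → i ≤ c → u i ∈ G.verts := by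
    intro i h1 h2; rw [hverts]; exact Or.inl (Or.inr ⟨i, ⟨h1, h2⟩, rfl⟩)
  have hv1 : ∀ i, 1 ≤ i → i ≤ c → v i ∈ G.verts := by
    intro i h1 h2; rw [hverts]; exact Or.inr ⟨i, ⟨h1, h2⟩, rfl⟩
  -- out-edges
  have eu : ∀ i, 1 ≤ i → i + 1 ≤ c → ∀ w, G.Edge (u i) w → w = u (i+1) ∨ w = t1 := by
    intro i h1 h2 w hw
    rw [hedges] at hw
    have hui := hun i ⟨h1, by omega⟩
    rcases hw with ⟨j, hj1, hj2, ⟨h, rfl⟩ | ⟨h, rfl⟩⟩ | ⟨h, _⟩ | ⟨h | h, _⟩ |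
      ⟨j, hj1, hj2, ⟨h, _⟩ | ⟨h, rfl⟩ | ⟨h, rfl⟩⟩
    · have := huinj ⟨h1, by omega⟩ ⟨hj1, by omega⟩ h
      subst this; simp
    · exact absurd h (huv i ⟨h1, by omega⟩ j ⟨hj1, by omega⟩)
    · grind
    · have := huinj ⟨h1, by omega⟩ ⟨by omega, le_refl c⟩ h
      omega
    · exact absurd h (huv i ⟨h1, by omega⟩ c ⟨by omega, le_refl c⟩)
    · grind
    · simp
    · exact absurd h (huv i ⟨h1, by omega⟩ j ⟨hj1, by omega⟩)
  have ev : ∀ i, 1 ≤ i → i + 1 ≤ c → ∀ w, G.Edge (v i) w → w = v (i+1) ∨ w = t1' := by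
    intro i h1 h2 w hw
    rw [hedges] at hw
    have hvi := hvn i ⟨h1, by omega⟩
    rcases hw with ⟨j, hj1, hj2, ⟨h, rfl⟩ | ⟨h, rfl⟩⟩ | ⟨h, _⟩ | ⟨h | h, _⟩ |
      ⟨j, hj1, hj2, ⟨h, _⟩ | ⟨h, rfl⟩ | ⟨h, rfl⟩⟩
    · exact absurd h.symm (huv j ⟨hj1, by omega⟩ i ⟨h1, by omega⟩)
    · have := hvinj ⟨h1, by omega⟩ ⟨hj1, by omega⟩ h
      subst this; simp
    · grind
    · exact absurd h.symm (huv c ⟨by omega, le_refl c⟩ i ⟨h1, by omega⟩)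
    · have := hvinj ⟨h1, by omega⟩ ⟨by omega, le_refl c⟩ h
      omega
    · grind
    · exact absurd h.symm (huv j ⟨hj1, by omega⟩ i ⟨h1, by omega⟩)
    · simp
  have et : ∀ t, t = t1 ∨ t = t1' → ∀ w, ¬ G.Edge t w := by
    intro t ht w hw
    rw [hedges] at hw
    rcases hw with ⟨j, hj1, hj2, ⟨h, _⟩ | ⟨h, _⟩⟩ | ⟨h, _⟩ | ⟨h | h, _⟩ |
      ⟨j, hj1, hj2, ⟨h, _⟩ | ⟨h, _⟩ | ⟨h, _⟩⟩
    · have := hun j ⟨hj1, by omega⟩; grind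
    · have := hvn j ⟨hj1, by omega⟩; grind
    · grind
    · have := hun c ⟨by omega, le_refl c⟩; grind
    · have := hvn c ⟨by omega, le_refl c⟩; grind
    · grind
    · have := hun j ⟨hj1, by omega⟩; grind
    · have := hvn j ⟨hj1, by omega⟩; grind
  have es : ∀ s, s = s2 ∨ s = s3 → ∀ w, G.Edge s w → w = u 1 ∨ w = v 1 := by
    intro t ht w hw
    rw [hedges] at hw
    rcases hw with ⟨j, hj1, hj2, ⟨h, _⟩ | ⟨h, _⟩⟩ | ⟨_, h⟩ | ⟨h | h, _⟩ |
      ⟨j, hj1, hj2, ⟨h, _⟩ | ⟨h, _⟩ | ⟨h, _⟩⟩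
    · have := hun j ⟨hj1, by omega⟩; grind
    · have := hvn j ⟨hj1, by omega⟩; grind
    · exact h
    · have := hun c ⟨by omega, le_refl c⟩; grind
    · have := hvn c ⟨by omega, le_refl c⟩; grind
    · grind
    · have := hun j ⟨hj1, by omega⟩; grind
    · have := hvn j ⟨hj1, by omega⟩; grind
  -- in-edges
  have it1 : ∀ w, G.Edge w t1 → ∃ i, 1 ≤ i ∧ i ≤ c ∧ w = u i := by
    intro w hw
    rw [hedges] at hw
    rcases hw with ⟨j, hj1, hj2, ⟨_, h⟩ | ⟨_, h⟩⟩ | ⟨_, h | h⟩ | ⟨_, h⟩ |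
      ⟨j, hj1, hj2, ⟨_, h | h⟩ | ⟨h, _⟩ | ⟨_, h⟩⟩
    · have := hun (j+1) ⟨by omega, by omega⟩; grind
    · have := hvn (j+1) ⟨by omega, by omega⟩; grind
    · have := hun 1 ⟨le_refl _, by omega⟩; grind
    · have := hvn 1 ⟨le_refl _, by omega⟩; grind
    · grind
    · have := hun j ⟨hj1, by omega⟩; grind
    · have := hvn j ⟨hj1, by omega⟩; grind
    · exact ⟨j, hj1, hj2, h⟩
    · grind
  have it1' : ∀ w, G.Edge w t1' → ∃ i, 1 ≤ i ∧ i ≤ c ∧ w = v i := by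
    intro w hw
    rw [hedges] at hw
    rcases hw with ⟨j, hj1, hj2, ⟨_, h⟩ | ⟨_, h⟩⟩ | ⟨_, h | h⟩ | ⟨_, h⟩ |
      ⟨j, hj1, hj2, ⟨_, h | h⟩ | ⟨_, h⟩ | ⟨h, _⟩⟩
    · have := hun (j+1) ⟨by omega, by omega⟩; grind
    · have := hvn (j+1) ⟨by omega, by omega⟩; grind
    · have := hun 1 ⟨le_refl _, by omega⟩; grind
    · have := hvn 1 ⟨le_refl _, by omega⟩; grind
    · grind
    · have := hun j ⟨hj1, by omega⟩; grind
    · have := hvn j ⟨hj1, by omega⟩; grind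
    · grind
    · exact ⟨j, hj1, hj2, h⟩
  -- the long paths
  have key : ∀ idx : Fin (3 * c - 1), (idx : ℕ) < 2 * c - 1 →
      (∀ i, 1 ≤ i → i ≤ c → u i ∈ P idx) ∨ (∀ i, 1 ≤ i → i ≤ c → v i ∈ P idx) := by
    intro idx hidx
    obtain ⟨hh, hl⟩ := hA idx hidx
    obtain ⟨s, hs, hhs⟩ : ∃ s, (s = s2 ∨ s = s3) ∧ (P idx).head? = some s := by
      rcases hh with h | h
      · exact ⟨s2, Or.inl rfl, h⟩
      · exact ⟨s3, Or.inr rfl, h⟩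
    obtain ⟨t, ht, hlt⟩ : ∃ t, (t = t2 ∨ t = t3) ∧ (P idx).getLast? = some t := by
      rcases hl with h | h
      · exact ⟨t2, Or.inl rfl, h⟩
      · exact ⟨t3, Or.inr rfl, h⟩
    have hn : ∀ x, x = t1 ∨ x = t1' → x ∉ P idx := by
      intro x hx hmem
      obtain ⟨y, _, hy⟩ := chain_succ _ (hch idx) x t hmem hlt (by grind)
      exact et x hx y hy
    obtain ⟨y, hy, hsy⟩ := chain_succ _ (hch idx) s t (List.mem_of_mem_head? hhs) hlt (by grind)
    rcases es s hs y hsy with rfl | rfl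
    · left
      intro i h1
      induction i, h1 using Nat.le_induction with
      | base => intro _; exact hy
      | succ k hk ih =>
        intro hk2
        have := hun k ⟨hk, by omega⟩
        obtain ⟨z, hz, hkz⟩ := chain_succ _ (hch idx) (u k) t (ih (by omega)) hlt (by grind)
        rcases eu k hk hk2 z hkz with rfl | rfl
        · exact hz
        · exact absurd hz (hn _ (Or.inl rfl))
    · right
      intro i h1
      induction i, h1 using Nat.le_induction with
      | base => intro _; exact hy
      | succ k hk ih =>
        intro hk2
        have := hvn k ⟨hk, by omega⟩
        obtain ⟨z, hz, hkz⟩ := chain_succ _ (hch idx) (v k) t (ih (by omega)) hlt (by grind)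
        rcases ev k hk hk2 z hkz with rfl | rfl
        · exact hz
        · exact absurd hz (hn _ (Or.inr rfl))
  obtain ⟨w, hw, hwe⟩ := chain_pred _ (hch a) t1 s1 (List.mem_of_getLast? hat) (hB a ha).1
    (by grind)
  obtain ⟨i, hi1, hi2, rfl⟩ := it1 w hwe
  obtain ⟨w, hw', hwe'⟩ := chain_pred _ (hch b) t1' s1 (List.mem_of_getLast? hbt) (hB b hb).1
    (by grind)
  obtain ⟨j, hj1, hj2, rfl⟩ := it1' w hwe'
  let L : Finset (Fin (3 * c - 1)) := Finset.univ.filter (fun x => (x : ℕ) < 2 * c - 1)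
  have hL : L.card = 2 * c - 1 := by
    rw [Fin.card_filter_val_lt]; omega
  have count : ∀ (z : V) (d : Fin (3 * c - 1)), z ∈ G.verts → 2 * c - 1 ≤ (d : ℕ) → z ∈ P d →
      (L.filter (fun x => z ∈ P x)).card + 1 ≤ c := by
    intro z d hz hd hzd
    have h1 := hcap z hz
    rw [← Finset.card_insert_of_notMem (a := d) (by simp [L]; omega), ← Set.ncard_coe_finset]
    refine le_trans (Set.ncard_le_ncard ?_ (Set.toFinite _)) h1
    intro x hx
    simp only [Finset.coe_insert, Set.mem_insert_iff, Finset.mem_coe, Finset.mem_filter] at hx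
    rcases hx with rfl | hx
    · exact hzd
    · exact hx.2
  have c1 := count (u i) a (hu1 i hi1 hi2) ha hw
  have c2 := count (v j) b (hv1 j hj1 hj2) hb hw'
  have hsub : L ⊆ L.filter (fun x => u i ∈ P x) ∪ L.filter (fun x => v j ∈ P x) := by
    intro x hx
    have hx2 : (x : ℕ) < 2 * c - 1 := by simpa [L] using hx
    rw [Finset.mem_union]
    rcases key x hx2 with h | h
    · exact Or.inl (Finset.mem_filter.2 ⟨hx, h i hi1 hi2⟩)
    · exact Or.inr (Finset.mem_filter.2 ⟨hx, h j hj1 hj2⟩)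
  have h3 := Finset.card_le_card hsub
  have h4 := Finset.card_union_le (L.filter (fun x => u i ∈ P x)) (L.filter (fun x => v j ∈ P x))
  omega
end
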